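/- arXiv:1506.06819 — 4 statements merged into one kernel-verified Lean document; each statement's English description precedes it below -/
import Mathlib

section
/- Let d ≥ 1 and let ∂_0, ∂_1, …, ∂_d be the boundary matrices of a d-dimensional cell complex X (integer matrices with ∂_{k−1}∂_k = 0 for 1 ≤ k ≤ d, where ∂_0 is the all-ones row vector indexed by the 0-cells). Suppose X is ℤ-acyclic in positive codimension, i.e., ker_ℤ(∂_k) = im_ℤ(∂_{k+1}) for all 0 ≤ k ≤ d−1. Then τ_d(X) · ∏_{0 ≤ i ≤ d, d−i odd} λ(∂_i ∂_iᵀ) = ∏_{0 ≤ i ≤ d, d−i even} λ(∂_i ∂_iᵀ), where λ denotes the pseudodeterminant of the corresponding real matrix; equivalently, τ_d(X) = ∏_{i=0}^{d} λ(∂_i ∂_iᵀ)^{(−1)^{d−i}}. -/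
open Matrix

/-- The pseudodeterminant of a square integer matrix: the product of its nonzero
eigenvalues (roots of the characteristic polynomial over `ℂ`), counted with algebraic
multiplicity; it equals `1` if all eigenvalues are zero. -/
noncomputable def pseudoDet {N : Type*} [Fintype N] [DecidableEq N]
    (M : Matrix N N ℤ) : ℂ :=
  (((M.map (Int.cast : ℤ → ℂ)).charpoly.roots).filter (· ≠ 0)).prod

/-!
Factor `A = B * C`, with the columns of `B` a basis of `im A` and `C` surjective. The nonzero
eigenvalues of `A * Aᵀ` are those of `(C * Cᵀ) * (Bᵀ * B)`, and `det (C * Cᵀ)` is the Gram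
determinant of the lattice `ker C = ker A`. So `λ(∂_k ∂_kᵀ)` is the Gram determinant of `im ∂_k`
times that of `ker ∂_k`, and acyclicity makes the alternating product telescope to the Gram
determinant of `ker ∂_d`, because that of `im ∂_0` is `1`. Expanding `det (C * Cᵀ)` for `A = ∂_d` by
Cauchy-Binet identifies the result with `τ_d`: the minor of `C` at a forest `T` is, up to sign, the
index in `im ∂_d` of the sublattice spanned by `T`.
-/

namespace TreeCount

open Module Polynomial

section CauchyBinet

theorem image_val_comp_eq_of_injective {m n : Type*} [Fintype m] [DecidableEq n] {T : Finset n}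
    (hT : T.card = Fintype.card m) {q : m → T} (hq : q.Injective) :
    Finset.univ.image (Subtype.val ∘ q) = T := by
  refine Finset.eq_of_subset_of_card_le (Finset.image_subset_iff.mpr fun i _ => (q i).2) ?_
  rw [Finset.card_image_of_injective _ (Subtype.val_injective.comp hq), hT, Finset.card_univ]

variable {R m n : Type*} [CommRing R] [Fintype m] [DecidableEq m]

theorem det_submatrix_eq_zero_of_not_injective (B : Matrix n m R) {p : m → n}
    (hp : ¬ p.Injective) : (B.submatrix p id).det = 0 := by
  simp only [Function.Injective, not_forall] at hp
  obtain ⟨i, j, hij, hne⟩ := hp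
  exact det_zero_of_row_eq hne (funext fun k => by simp [hij])

variable [Fintype n]

theorem det_mul_eq_sum_prod_mul_det_submatrix (A : Matrix m n R) (B : Matrix n m R) :
    (A * B).det = ∑ p : m → n, (∏ i, A i (p i)) * (B.submatrix p id).det := by
  classical
  have row_expansion : A * B = of fun i => ∑ j, A i j • B j := by
    ext i k
    simp [mul_apply]
  calc (A * B).det
      = detRowAlternating.toMultilinearMap fun i => ∑ j, A i j • B j := by
        rw [row_expansion]; rfl
    _ = ∑ p : m → n, detRowAlternating.toMultilinearMap fun i => A i (p i) • B (p i) :=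
        MultilinearMap.map_sum _ _
    _ = ∑ p : m → n, (∏ i, A i (p i)) * (B.submatrix p id).det :=
        Finset.sum_congr rfl fun p _ => MultilinearMap.map_smul_univ _ _ _

theorem det_mul_eq_sum_injective [DecidableEq n] (A : Matrix m n R) (B : Matrix n m R) :
    (A * B).det =
      ∑ p : m → n with p.Injective, (∏ i, A i (p i)) * (B.submatrix p id).det := by
  rw [det_mul_eq_sum_prod_mul_det_submatrix, Finset.sum_filter_of_ne]
  intro p _ hp
  by_contra hinj
  exact hp (by rw [det_submatrix_eq_zero_of_not_injective B hinj, mul_zero])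

/-- The **Cauchy-Binet formula**. Summing `det (A_T * B_T)` rather than `det A_T * det B_T` avoids
choosing an order on each subset `T`. -/
theorem det_mul_eq_sum_powersetCard (A : Matrix m n R) (B : Matrix n m R) :
    (A * B).det = ∑ T ∈ (Finset.univ : Finset n).powersetCard (Fintype.card m),
      (A.submatrix id ((↑) : T → n) * B.submatrix ((↑) : T → n) id).det := by
  classical
  have image_mem : ∀ p ∈ Finset.univ.filter (Function.Injective (α := m) (β := n)),
      Finset.univ.image p ∈ Finset.univ.powersetCard (Fintype.card m) := fun p hp =>
    Finset.mem_powersetCard_univ.mpr <|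
      Finset.card_image_of_injective _ (Finset.mem_filter.mp hp).2
  rw [det_mul_eq_sum_injective, ← Finset.sum_fiberwise_of_maps_to image_mem]
  refine Finset.sum_congr rfl fun T hT => ?_
  rw [det_mul_eq_sum_injective]
  refine (Finset.sum_nbij (fun q => Subtype.val ∘ q) ?_ ?_ ?_ fun _ _ => rfl).symm
  · intro q hq
    have hq : q.Injective := (Finset.mem_filter.mp hq).2
    simpa [image_val_comp_eq_of_injective (Finset.mem_powersetCard_univ.mp hT) hq] using
      Subtype.val_injective.comp hq
  · exact fun q _ q' _ h => funext fun i => Subtype.ext (congrFun h i)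
  · intro p hp
    simp only [Finset.coe_filter, Finset.mem_filter, Finset.mem_univ, true_and,
      Set.mem_ofPred_eq] at hp
    obtain ⟨hinj, rfl⟩ := hp
    refine ⟨fun i => ⟨p i, Finset.mem_image_of_mem p (Finset.mem_univ i)⟩, ?_, rfl⟩
    rw [Finset.mem_coe, Finset.mem_filter_univ]
    exact fun i j h => hinj (congrArg Subtype.val h)

end CauchyBinet

section InjectiveSurjective

variable {R S l m n : Type*} [CommRing R] [Fintype m] [Fintype n]

theorem ker_mulVecLin_mul_of_injective {B : Matrix l m R} {C : Matrix m n R}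
    (hB : Function.Injective B.mulVec) :
    LinearMap.ker (B * C).mulVecLin = LinearMap.ker C.mulVecLin := by
  rw [mulVecLin_mul, LinearMap.ker_comp_of_ker_eq_bot _ (LinearMap.ker_eq_bot.mpr hB)]

theorem mulVec_injective_mul_iff {B : Matrix l m R} (hB : Function.Injective B.mulVec)
    (C : Matrix m n R) : Function.Injective (B * C).mulVec ↔ Function.Injective C.mulVec := by
  rw [← coe_mulVecLin, ← coe_mulVecLin, ← LinearMap.ker_eq_bot, ← LinearMap.ker_eq_bot,
    ker_mulVecLin_mul_of_injective hB]

theorem rank_mul_of_injective_of_surjective [Nontrivial R] {B : Matrix l m R} {C : Matrix m n R}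
    (hB : Function.Injective B.mulVec) (hC : Function.Surjective C.mulVec) :
    (B * C).rank = Fintype.card m := by
  rw [rank, mulVecLin_mul, LinearMap.range_comp_of_range_eq_top _ (LinearMap.range_eq_top.mpr hC),
    LinearMap.finrank_range_of_inj hB, finrank_fintype_fun_eq_card]

theorem mulVec_injective_map_algebraMap [Finite l] [CommRing S] [IsDomain S] [Algebra R S]
    [FaithfulSMul R S] {B : Matrix l m R} (hB : Function.Injective B.mulVec) :
    Function.Injective (B.map (algebraMap R S)).mulVec :=
  mulVec_injective_iff.mpr <|
    linearIndependent_algebraMap_comp_iff.mpr <| mulVec_injective_iff.mp hB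

theorem mulVec_surjective_map [Finite l] [CommRing S] (f : R →+* S) {C : Matrix l n R}
    (hC : Function.Surjective C.mulVec) : Function.Surjective (C.map f).mulVec := by
  classical
  obtain ⟨X, hCX⟩ := mulVec_surjective_iff_exists_right_inverse.mp hC
  refine mulVec_surjective_iff_exists_right_inverse.mpr ⟨X.map f, ?_⟩
  rw [← Matrix.map_mul, hCX, Matrix.map_one f f.map_zero f.map_one]

end InjectiveSurjective

section Exactness

variable {R l m n o : Type*}

theorem mul_left_cancel_of_mulVec_injective [NonUnitalNonAssocSemiring R] [Fintype m]
    {B : Matrix l m R} (hB : Function.Injective B.mulVec) {X Y : Matrix m n R}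
    (h : B * X = B * Y) : X = Y :=
  ext_col fun j => hB (congrArg (fun M => M.col j) h)

variable [CommRing R]

theorem exists_mul_eq_of_range_le [Fintype m] [Fintype n] {A : Matrix l n R} {B : Matrix l m R}
    (h : LinearMap.range A.mulVecLin ≤ LinearMap.range B.mulVecLin) :
    ∃ X : Matrix m n R, B * X = A := by
  classical
  choose x hx using fun j => h ⟨Pi.single j 1, rfl⟩
  refine ⟨(of x)ᵀ, ext_col fun j => ?_⟩
  exact (hx j).trans (mulVec_single_one A j)

theorem mul_eq_zero_iff_range_le_ker [Fintype m] [Fintype n] {A : Matrix l m R}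
    {B : Matrix m n R} :
    A * B = 0 ↔ LinearMap.range B.mulVecLin ≤ LinearMap.ker A.mulVecLin := by
  classical
  rw [LinearMap.range_le_ker_iff, ← mulVecLin_mul, ← toLin'_apply', map_eq_zero_iff _
    toLin'.injective]

variable [Fintype m] [Fintype n] [Fintype o] [DecidableEq m] [DecidableEq n] [DecidableEq o]

theorem exists_inverse_fromCols_fromRows {B : Matrix n m R} {C : Matrix o n R}
    (hB : Function.Injective B.mulVec) (hC : Function.Surjective C.mulVec)
    (hexact : LinearMap.ker C.mulVecLin = LinearMap.range B.mulVecLin) :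
    ∃ (S : Matrix n o R) (P : Matrix m n R), C * S = 1 ∧ P * B = 1 ∧
      fromCols B S * fromRows P C = 1 ∧ fromRows P C * fromCols B S = 1 := by
  obtain ⟨S, hCS⟩ := mulVec_surjective_iff_exists_right_inverse.mp hC
  have hCB : C * B = 0 := mul_eq_zero_iff_range_le_ker.mpr hexact.ge
  have hproj : C * (1 - S * C) = 0 := by
    rw [Matrix.mul_sub, ← Matrix.mul_assoc, hCS, Matrix.one_mul, Matrix.mul_one, sub_self]
  obtain ⟨P, hBP⟩ := exists_mul_eq_of_range_le
    ((mul_eq_zero_iff_range_le_ker.mp hproj).trans hexact.le)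
  have hPB : P * B = 1 := mul_left_cancel_of_mulVec_injective hB <| by
    rw [← Matrix.mul_assoc, hBP, Matrix.sub_mul, Matrix.mul_assoc, hCB]
    simp
  have hPS : P * S = 0 := mul_left_cancel_of_mulVec_injective hB <| by
    rw [← Matrix.mul_assoc, hBP, Matrix.sub_mul, Matrix.mul_assoc, hCS]
    simp
  refine ⟨S, P, hCS, hPB, ?_, ?_⟩
  · rw [fromCols_mul_fromRows, hBP, sub_add_cancel]
  · rw [fromRows_mul_fromCols, hPB, hPS, hCB, hCS, fromBlocks_one]

end Exactness

section GramMatrix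

variable {m n o : Type*} [Fintype m] [Fintype n] [Fintype o]

theorem mulVec_injective_iff_det_ne_zero {R : Type*} [CommRing R] [IsDomain R] [DecidableEq n]
    {M : Matrix n n R} : Function.Injective M.mulVec ↔ M.det ≠ 0 := by
  rw [← coe_mulVecLin, ← LinearMap.ker_eq_bot, ker_mulVecLin_eq_bot_iff, Ne,
    ← exists_mulVec_eq_zero_iff]
  push Not
  exact forall_congr' fun v => not_imp_not.symm

theorem det_transpose_mul_self_ne_zero {R : Type*} [CommRing R] [LinearOrder R]
    [IsStrictOrderedRing R] [DecidableEq n] {B : Matrix m n R} (hB : Function.Injective B.mulVec) :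
    (Bᵀ * B).det ≠ 0 := by
  rw [← mulVec_injective_iff_det_ne_zero, ← coe_mulVecLin, ← LinearMap.ker_eq_bot,
    ker_mulVecLin_eq_bot_iff]
  intro v hv
  have norm_sq : (B *ᵥ v) ⬝ᵥ (B *ᵥ v) = 0 := by
    rw [dotProduct_mulVec, ← mulVec_transpose, mulVec_mulVec, hv, zero_dotProduct]
  exact hB ((dotProduct_self_eq_zero.mp norm_sq).trans (mulVec_zero B).symm)

theorem det_self_mul_transpose_ne_zero {R : Type*} [CommRing R] [LinearOrder R]
    [IsStrictOrderedRing R] [DecidableEq m] {C : Matrix m n R}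
    (hC : Function.Surjective C.mulVec) : (C * Cᵀ).det ≠ 0 := by
  classical
  obtain ⟨S, hCS⟩ := mulVec_surjective_iff_exists_right_inverse.mp hC
  have left_inverse : Function.LeftInverse Sᵀ.mulVec Cᵀ.mulVec := fun v => by
    rw [mulVec_mulVec, ← transpose_mul, hCS, transpose_one, one_mulVec]
  simpa using det_transpose_mul_self_ne_zero left_inverse.injective

theorem det_transpose_mul_self_eq_one [DecidableEq m] [DecidableEq n]
    {M : Matrix n m ℤ} {N : Matrix m n ℤ} (hMN : M * N = 1) (hNM : N * M = 1) :
    (Mᵀ * M).det = 1 := by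
  let e : m ≃ n := indexEquivOfInv hNM hMN
  have gram : Mᵀ * M = (M.submatrix e id)ᵀ * M.submatrix e id := by
    rw [transpose_submatrix, submatrix_mul_equiv, submatrix_id_id]
  have inverse : N.submatrix id e * M.submatrix e id = 1 := by
    rw [submatrix_mul_equiv, hNM, submatrix_id_id]
  rw [gram, det_mul, det_transpose, ← sq]
  exact Int.isUnit_sq (isUnit_det_of_left_inverse inverse)

theorem det_self_mul_transpose_eq_det_transpose_mul_self [DecidableEq m] [DecidableEq o]
    {B : Matrix n m ℤ} {C : Matrix o n ℤ} (hB : Function.Injective B.mulVec)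
    (hC : Function.Surjective C.mulVec)
    (hexact : LinearMap.ker C.mulVecLin = LinearMap.range B.mulVecLin) :
    (C * Cᵀ).det = (Bᵀ * B).det := by
  classical
  have hCB : C * B = 0 := mul_eq_zero_iff_range_le_ker.mpr hexact.ge
  obtain ⟨S, P, hCS, hPB, hMN, hNM⟩ := exists_inverse_fromCols_fromRows hB hC hexact
  -- Multiply the square matrix `[B Cᵀ]` by `N` and by `Mᵀ`; both products are block triangular,
  -- and since `M` is unimodular their determinants agree.
  set M := fromCols B S with hM
  set N := fromRows P C with hN
  have upper : N * fromCols B Cᵀ = fromBlocks 1 (P * Cᵀ) 0 (C * Cᵀ) := by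
    rw [hN, fromRows_mul_fromCols, hPB, hCB]
  have lower : Mᵀ * fromCols B Cᵀ = fromBlocks (Bᵀ * B) 0 (Sᵀ * B) 1 := by
    rw [hM, transpose_fromCols, fromRows_mul_fromCols, ← transpose_mul, ← transpose_mul, hCB,
      hCS, transpose_zero, transpose_one]
  calc (C * Cᵀ).det
      = (Mᵀ * M).det * (N * fromCols B Cᵀ).det := by
        rw [det_transpose_mul_self_eq_one hMN hNM, upper, det_fromBlocks_zero₂₁, det_one,
          one_mul, one_mul]
    _ = (Mᵀ * fromCols B Cᵀ).det := by
        rw [← det_mul, Matrix.mul_assoc, ← Matrix.mul_assoc M, hMN, Matrix.one_mul]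
    _ = (Bᵀ * B).det := by rw [lower, det_fromBlocks_zero₁₂, det_one, mul_one]

end GramMatrix

section ImageFactorization

variable {R m n : Type*} [CommRing R] [IsDomain R] [IsPrincipalIdealRing R] [Finite m]

/-- The matrix whose columns are the vectors of a chosen basis of the submodule `L`. -/
noncomputable def basisMatrix (L : Submodule R (m → R)) :
    Matrix m (Fin (finrank R L)) R :=
  (of fun j => (finBasis R L j : m → R))ᵀ

theorem mulVec_injective_basisMatrix (L : Submodule R (m → R)) :
    Function.Injective (basisMatrix L).mulVec :=
  mulVec_injective_iff.mpr <|
    (finBasis R L).linearIndependent.map' L.subtype L.ker_subtype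

theorem range_mulVecLin_basisMatrix (L : Submodule R (m → R)) :
    LinearMap.range (basisMatrix L).mulVecLin = L := by
  have range_col : Set.range (basisMatrix L).col = L.subtype '' Set.range (finBasis R L) := by
    rw [← Set.range_comp]
    rfl
  rw [range_mulVecLin, range_col, ← Submodule.map_span, Basis.span_eq, Submodule.map_subtype_top]

theorem exists_basisMatrix_range_mul_eq [Fintype n] (A : Matrix m n R) :
    ∃ C : Matrix (Fin (finrank R (LinearMap.range A.mulVecLin))) n R, Function.Surjective C.mulVec ∧
      basisMatrix (LinearMap.range A.mulVecLin) * C = A := by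
  have hrange := range_mulVecLin_basisMatrix (LinearMap.range A.mulVecLin)
  obtain ⟨C, hC⟩ := exists_mul_eq_of_range_le hrange.ge
  refine ⟨C, fun y => ?_, hC⟩
  obtain ⟨x, hx⟩ := hrange.le ⟨y, rfl⟩
  refine ⟨x, mulVec_injective_basisMatrix _ ?_⟩
  rw [mulVec_mulVec, hC]
  exact hx

end ImageFactorization

section GramDet

variable {m n : Type*} [Fintype m] [Fintype n]

/-- The Gram determinant, i.e. the squared covolume, of a sublattice of `ℤ^m`. It does not depend
on the basis chosen by `basisMatrix`, as a change of basis multiplies it by the square of a unit. -/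
noncomputable def gramDet (L : Submodule ℤ (m → ℤ)) : ℤ :=
  ((basisMatrix L)ᵀ * basisMatrix L).det

theorem gramDet_ne_zero (L : Submodule ℤ (m → ℤ)) : gramDet L ≠ 0 :=
  det_transpose_mul_self_ne_zero (mulVec_injective_basisMatrix L)

theorem gramDet_ker_of_surjective [DecidableEq m] {C : Matrix m n ℤ}
    (hC : Function.Surjective C.mulVec) :
    gramDet (LinearMap.ker C.mulVecLin) = (C * Cᵀ).det :=
  (det_self_mul_transpose_eq_det_transpose_mul_self (mulVec_injective_basisMatrix _) hC
    (range_mulVecLin_basisMatrix _).symm).symm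

theorem gramDet_bot : gramDet (⊥ : Submodule ℤ (m → ℤ)) = 1 := by
  have : IsEmpty (Fin (finrank ℤ (⊥ : Submodule ℤ (m → ℤ)))) := by
    rw [finrank_bot]
    infer_instance
  exact det_isEmpty

theorem gramDet_top : gramDet (⊤ : Submodule ℤ (m → ℤ)) = 1 := by
  have ker_eq_top : LinearMap.ker (0 : Matrix (Fin 0) m ℤ).mulVecLin = ⊤ := by
    rw [mulVecLin_zero, LinearMap.ker_zero]
  rw [← ker_eq_top, gramDet_ker_of_surjective (Function.surjective_to_subsingleton _),
    det_isEmpty]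

theorem gramDet_range_of_forall_eq_one [Subsingleton m] {A : Matrix m n ℤ}
    (hA : ∀ i j, A i j = 1) : gramDet (LinearMap.range A.mulVecLin) = 1 := by
  classical
  cases isEmpty_or_nonempty n with
  | inl _ =>
    rw [Subsingleton.elim A.mulVecLin 0, LinearMap.range_zero, gramDet_bot]
  | inr hn =>
    obtain ⟨j⟩ := hn
    have range_eq_top : LinearMap.range A.mulVecLin = ⊤ := LinearMap.range_eq_top.mpr fun x =>
      ⟨Pi.single j (∑ i, x i), funext fun i => by
        simp [hA, Fintype.sum_subsingleton x i]⟩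
    rw [range_eq_top, gramDet_top]

end GramDet

section PseudoDet

theorem filter_ne_zero_roots_X_pow_mul {R : Type*} [CommRing R] [IsDomain R] [DecidableEq R]
    {p : R[X]} (hp : p ≠ 0) (k : ℕ) :
    (X ^ k * p).roots.filter (· ≠ 0) = p.roots.filter (· ≠ 0) := by
  rw [roots_mul (mul_ne_zero (pow_ne_zero k X_ne_zero) hp), roots_X_pow, Multiset.filter_add,
    Multiset.filter_nsmul, Multiset.filter_singleton]
  simp

theorem map_intCast_mul {R l m n : Type*} [Fintype m] [NonAssocRing R] (A : Matrix l m ℤ)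
    (B : Matrix m n ℤ) :
    (A * B).map (Int.cast : ℤ → R) =
      A.map (Int.cast : ℤ → R) * B.map (Int.cast : ℤ → R) :=
  Matrix.map_mul (f := Int.castRingHom R)

variable {m n : Type*} [Fintype m] [Fintype n] [DecidableEq m] [DecidableEq n]

theorem pseudoDet_mul_comm (A : Matrix m n ℤ) (B : Matrix n m ℤ) :
    pseudoDet (A * B) = pseudoDet (B * A) := by
  rw [pseudoDet, pseudoDet, map_intCast_mul, map_intCast_mul,
    ← filter_ne_zero_roots_X_pow_mul (charpoly_monic _).ne_zero (Fintype.card n),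
    charpoly_mul_comm', filter_ne_zero_roots_X_pow_mul (charpoly_monic _).ne_zero]

theorem pseudoDet_eq_det_of_det_ne_zero {M : Matrix n n ℤ} (hM : M.det ≠ 0) :
    pseudoDet M = M.det := by
  have prod_roots : (M.map (Int.cast : ℤ → ℂ)).charpoly.roots.prod = M.det := by
    rw [← det_eq_prod_roots_charpoly, Int.cast_det]
  have zero_notMem : (0 : ℂ) ∉ (M.map (Int.cast : ℤ → ℂ)).charpoly.roots := fun h =>
    hM <| Int.cast_eq_zero.mp <| prod_roots.symm.trans (Multiset.prod_eq_zero h)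
  rw [pseudoDet, Multiset.filter_eq_self.mpr fun z hz => ne_of_mem_of_not_mem hz zero_notMem,
    prod_roots]

theorem pseudoDet_self_mul_transpose {m n : Type*} [Fintype m] [Fintype n] [DecidableEq m]
    (A : Matrix m n ℤ) :
    pseudoDet (A * Aᵀ) =
      gramDet (LinearMap.range A.mulVecLin) * gramDet (LinearMap.ker A.mulVecLin) := by
  obtain ⟨C, hC, hBC⟩ := exists_basisMatrix_range_mul_eq A
  set B := basisMatrix (LinearMap.range A.mulVecLin)
  have hBinj : Function.Injective B.mulVec := mulVec_injective_basisMatrix _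
  have gramDet_ker : gramDet (LinearMap.ker A.mulVecLin) = (C * Cᵀ).det := by
    rw [← gramDet_ker_of_surjective hC, ← ker_mulVecLin_mul_of_injective hBinj, hBC]
  have det_ne_zero : (C * Cᵀ * (Bᵀ * B)).det ≠ 0 := by
    rw [det_mul]
    exact mul_ne_zero (det_self_mul_transpose_ne_zero hC) (det_transpose_mul_self_ne_zero hBinj)
  calc pseudoDet (A * Aᵀ)
      = pseudoDet (B * (C * Cᵀ * Bᵀ)) := by
        conv_lhs => rw [← hBC, transpose_mul]
        simp only [Matrix.mul_assoc]
    _ = pseudoDet (C * Cᵀ * (Bᵀ * B)) := by rw [pseudoDet_mul_comm, Matrix.mul_assoc]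
    _ = (C * Cᵀ).det * (Bᵀ * B).det := by
        rw [pseudoDet_eq_det_of_det_ne_zero det_ne_zero, det_mul, Int.cast_mul]
    _ = gramDet (LinearMap.range A.mulVecLin) * gramDet (LinearMap.ker A.mulVecLin) := by
        rw [gramDet_ker, gramDet, mul_comm]

end PseudoDet

section Torsion

variable {l m n : Type*} [Fintype m] [Fintype n]

theorem card_torsion_int_of_finite (M : Type*) [AddCommGroup M] [Finite M] :
    Nat.card (Submodule.torsion ℤ M) = Nat.card M := by
  have torsion_eq_top : Submodule.torsion ℤ M = ⊤ :=
    (Submodule.isTorsion'_iff_torsion'_eq_top _).mp <|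
      isAddTorsion_iff_isTorsion_int.mp isAddTorsion_of_finite
  rw [torsion_eq_top]
  exact Nat.card_congr (Equiv.Set.univ M)

theorem card_quotient_range_mulVecLin [DecidableEq n] {Q : Matrix n n ℤ} (hQ : Q.det ≠ 0) :
    Nat.card ((n → ℤ) ⧸ LinearMap.range Q.mulVecLin) = Q.det.natAbs := by
  have hinj : Function.Injective Q.mulVecLin := mulVec_injective_iff_det_ne_zero.mpr hQ
  rw [← Submodule.natAbs_det_equiv _ (LinearEquiv.ofInjective _ hinj), ← LinearMap.det_toLin']
  rfl

theorem range_mulVecLin_submatrix_equiv {R : Type*} [CommSemiring R] (D : Matrix l n R)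
    (e : m ≃ n) :
    LinearMap.range (D.submatrix id e).mulVecLin = LinearMap.range D.mulVecLin := by
  rw [range_mulVecLin, range_mulVecLin, ← e.surjective.range_comp D.col]
  rfl

theorem det_self_mul_transpose_eq_sq {R : Type*} [CommRing R] [DecidableEq m] (D : Matrix m n R)
    (e : m ≃ n) : (D * Dᵀ).det = (D.submatrix id e).det ^ 2 := by
  have square : D * Dᵀ = D.submatrix id e * (D.submatrix id e)ᵀ := by
    rw [transpose_submatrix, submatrix_mul_equiv, submatrix_id_id]
  rw [square, det_mul, det_transpose, sq]

theorem sq_card_quotient_range_mulVecLin [DecidableEq m] {D : Matrix m n ℤ}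
    (hcard : Fintype.card m = Fintype.card n) (hD : (D * Dᵀ).det ≠ 0) :
    (Nat.card ((m → ℤ) ⧸ LinearMap.range D.mulVecLin) : ℤ) ^ 2 = (D * Dᵀ).det := by
  have e : m ≃ n := Fintype.equivOfCardEq hcard
  rw [det_self_mul_transpose_eq_sq D e] at hD ⊢
  rw [← range_mulVecLin_submatrix_equiv D e,
    card_quotient_range_mulVecLin (pow_ne_zero_iff two_ne_zero |>.mp hD), Int.natCast_natAbs,
    sq_abs]

theorem mulVec_injective_iff_det_self_mul_transpose_ne_zero {R : Type*} [CommRing R] [IsDomain R]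
    [DecidableEq m] {D : Matrix m n R} (hcard : Fintype.card m = Fintype.card n) :
    Function.Injective D.mulVec ↔ (D * Dᵀ).det ≠ 0 := by
  have e : m ≃ n := Fintype.equivOfCardEq hcard
  rw [det_self_mul_transpose_eq_sq D e, pow_ne_zero_iff two_ne_zero,
    ← mulVec_injective_iff_det_ne_zero, mulVec_injective_iff, mulVec_injective_iff,
    ← linearIndependent_equiv e]
  rfl

/-- An injective map `f` identifies `M ⧸ S` with `range f ⧸ f(S)`. -/
noncomputable def quotientEquivRangeQuotientMap {R M N : Type*} [Ring R] [AddCommGroup M]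
    [AddCommGroup N] [Module R M] [Module R N] {f : M →ₗ[R] N} (hf : Function.Injective f)
    (S : Submodule R M) :
    (M ⧸ S) ≃ₗ[R] LinearMap.range f ⧸ (S.map f).comap (LinearMap.range f).subtype :=
  Submodule.Quotient.equiv _ _ (LinearEquiv.ofInjective f hf) <| by
    ext ⟨_, x, rfl⟩
    simp only [Submodule.mem_map, Submodule.mem_comap, Subtype.ext_iff]
    rfl

theorem sq_card_torsion_quotient_range_mul [DecidableEq m] {B : Matrix l m ℤ} {D : Matrix m n ℤ}
    (hB : Function.Injective B.mulVec) (hcard : Fintype.card m = Fintype.card n)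
    (hD : (D * Dᵀ).det ≠ 0) :
    (Nat.card (Submodule.torsion ℤ (LinearMap.range B.mulVecLin ⧸
      (LinearMap.range (B * D).mulVecLin).comap (LinearMap.range B.mulVecLin).subtype)) : ℤ) ^ 2 =
      (D * Dᵀ).det := by
  have sq_card := sq_card_quotient_range_mulVecLin hcard hD
  have : Finite ((m → ℤ) ⧸ LinearMap.range D.mulVecLin) := by
    refine Nat.finite_of_card_ne_zero fun h => hD ?_
    rw [← sq_card, h, Nat.cast_zero, zero_pow two_ne_zero]
  rw [mulVecLin_mul, LinearMap.range_comp]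
  have equiv := quotientEquivRangeQuotientMap (f := B.mulVecLin) hB (LinearMap.range D.mulVecLin)
  have := Finite.of_equiv _ equiv.toEquiv
  rw [card_torsion_int_of_finite, ← Nat.card_congr equiv.toEquiv, sq_card]

end Torsion

section ForestCount

theorem linearIndependent_intCast_iff_mulVec_injective {m n : Type*} [Finite m]
    (A : Matrix m n ℤ) (T : Finset n) :
    LinearIndependent ℚ (fun τ : T => fun σ => ((A σ τ.1 : ℤ) : ℚ)) ↔
      Function.Injective (A.submatrix id ((↑) : T → n)).mulVec := by
  rw [mulVec_injective_iff, ← linearIndependent_algebraMap_comp_iff (R := ℤ) (S := ℚ)]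
  rfl

theorem span_image_transpose_eq_range_submatrix {R m n : Type*} [CommSemiring R]
    (A : Matrix m n R) (T : Finset n) :
    Submodule.span R ((fun τ => Aᵀ τ) '' ↑T) =
      LinearMap.range (A.submatrix id ((↑) : T → n)).mulVecLin := by
  rw [range_mulVecLin, Set.image_eq_range]
  rfl

variable {m n r : Type*} [Fintype n]

/-- `T` indexes a basis of the column space of `A` over `ℚ`: a maximal spanning forest, when `A` is
a boundary matrix of a cell complex. -/
def IsMaximalForest (A : Matrix m n ℤ) (T : Finset n) : Prop :=
  LinearIndependent ℚ (fun τ : T => fun σ => ((A σ τ.1 : ℤ) : ℚ)) ∧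
    T.card = (A.map (Int.cast : ℤ → ℚ)).rank

/-- The torsion-weighted count of the maximal forests of `A`, where the weight of `T` is the squared
torsion order of `K` modulo the columns in `T`. For a cell complex, `A = ∂_k` and
`K = ker ∂_{k-1}`. -/
noncomputable def torsionForestCount (K : Submodule ℤ (m → ℤ)) (A : Matrix m n ℤ) : ℕ :=
  ∑ᶠ T ∈ {T | IsMaximalForest A T},
    Nat.card (Submodule.torsion ℤ
      (K ⧸ Submodule.comap K.subtype (Submodule.span ℤ ((fun τ => Aᵀ τ) '' ↑T)))) ^ 2

variable [Finite m] [Fintype r] [DecidableEq r]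

theorem isMaximalForest_mul_iff {B : Matrix m r ℤ} {C : Matrix r n ℤ}
    (hB : Function.Injective B.mulVec) (hC : Function.Surjective C.mulVec) (T : Finset n) :
    IsMaximalForest (B * C) T ↔ T.card = Fintype.card r ∧
      (C.submatrix id ((↑) : T → n) * (C.submatrix id ((↑) : T → n))ᵀ).det ≠ 0 := by
  have rank_eq : ((B * C).map (Int.cast : ℤ → ℚ)).rank = Fintype.card r := by
    rw [map_intCast_mul]
    exact rank_mul_of_injective_of_surjective (mulVec_injective_map_algebraMap hB)
      (mulVec_surjective_map (Int.castRingHom ℚ) hC)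
  rw [IsMaximalForest, linearIndependent_intCast_iff_mulVec_injective, rank_eq, and_comm,
    and_congr_right_iff]
  intro hT
  rw [← mulVec_injective_iff_det_self_mul_transpose_ne_zero (by simp [hT]),
    ← mulVec_injective_mul_iff hB]
  rfl

theorem torsionForestCount_mul_eq_det {B : Matrix m r ℤ} {C : Matrix r n ℤ}
    (hB : Function.Injective B.mulVec) (hC : Function.Surjective C.mulVec) :
    (torsionForestCount (LinearMap.range B.mulVecLin) (B * C) : ℤ) = (C * Cᵀ).det := by
  classical
  rw [det_mul_eq_sum_powersetCard, torsionForestCount,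
    finsum_mem_eq_finite_toFinset_sum _ (Set.toFinite _), Nat.cast_sum]
  refine Finset.sum_subset_zero_on_sdiff ?_ ?_ ?_
  · intro T hT
    rw [Set.Finite.mem_toFinset, Set.mem_ofPred_eq, isMaximalForest_mul_iff hB hC] at hT
    exact Finset.mem_powersetCard_univ.mpr hT.1
  · intro T hT
    rw [Finset.mem_sdiff, Set.Finite.mem_toFinset, Set.mem_ofPred_eq,
      isMaximalForest_mul_iff hB hC, Finset.mem_powersetCard_univ] at hT
    by_contra hdet
    exact hT.2 ⟨hT.1, hdet⟩
  · intro T hT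
    rw [Set.Finite.mem_toFinset, Set.mem_ofPred_eq, isMaximalForest_mul_iff hB hC] at hT
    rw [span_image_transpose_eq_range_submatrix, Nat.cast_pow]
    exact sq_card_torsion_quotient_range_mul hB (by simp [hT.1]) hT.2

theorem torsionForestCount_range_eq_gramDet_ker (A : Matrix m n ℤ) :
    (torsionForestCount (LinearMap.range A.mulVecLin) A : ℤ) =
      gramDet (LinearMap.ker A.mulVecLin) := by
  obtain ⟨C, hC, hBC⟩ := exists_basisMatrix_range_mul_eq A
  have hB := mulVec_injective_basisMatrix (LinearMap.range A.mulVecLin)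
  have count_eq := torsionForestCount_mul_eq_det hB hC
  rw [hBC, range_mulVecLin_basisMatrix] at count_eq
  rw [count_eq, ← gramDet_ker_of_surjective hC, ← ker_mulVecLin_mul_of_injective hB, hBC]

end ForestCount

theorem mul_prod_filter_odd_eq_zpow_mul_prod_filter_even {F : Type*} [Field F] {D l : ℕ → F}
    (hD : D 0 ≠ 0) (n : ℕ) (hl : ∀ k ≤ n, l k = D k * D (k + 1)) :
    D (n + 1) * ∏ i ∈ (Finset.range (n + 1)).filter (fun i => (n - i) % 2 = 1), l i =
      D 0 ^ ((-1 : ℤ) ^ (n + 1)) *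
        ∏ i ∈ (Finset.range (n + 1)).filter (fun i => (n - i) % 2 = 0), l i := by
  induction n with
  | zero => simp [hl, hD]
  | succ n ih =>
    have odd_filter : (Finset.range (n + 2)).filter (fun i => (n + 1 - i) % 2 = 1) =
        (Finset.range (n + 1)).filter (fun i => (n - i) % 2 = 0) := by
      ext i; simp only [Finset.mem_filter, Finset.mem_range]; lia
    have even_filter : (Finset.range (n + 2)).filter (fun i => (n + 1 - i) % 2 = 0) =
        insert (n + 1) ((Finset.range (n + 1)).filter (fun i => (n - i) % 2 = 1)) := by
      ext i; simp only [Finset.mem_filter, Finset.mem_range, Finset.mem_insert]; lia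
    have sign_cancel : D 0 ^ ((-1 : ℤ) ^ (n + 2)) * D 0 ^ ((-1 : ℤ) ^ (n + 1)) = 1 := by
      rw [← zpow_add₀ hD]
      simp [pow_succ]
    rw [odd_filter, even_filter, Finset.prod_insert (by simp), hl (n + 1) le_rfl]
    linear_combination
      (-D 0 ^ ((-1 : ℤ) ^ (n + 2)) * D (n + 2)) * ih (fun k hk => hl k (hk.trans n.le_succ)) -
        (D (n + 2) * ∏ i ∈ (Finset.range (n + 1)).filter (fun i => (n - i) % 2 = 0), l i) *
          sign_cancel

end TreeCount

open TreeCount in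
theorem alternating_product_tree_count_general (e : ℕ) {c : ℕ → Type*} [∀ k, Fintype (c k)]
    [∀ k, DecidableEq (c k)] (bd : (k : ℕ) → Matrix (c k) (c (k + 1)) ℤ)
    (hacyclic : ∀ k ≤ e,
      LinearMap.ker (bd k).mulVecLin = LinearMap.range (bd (k + 1)).mulVecLin) :
    (torsionForestCount (LinearMap.ker (bd e).mulVecLin) (bd (e + 1)) : ℂ) *
        (∏ i ∈ (Finset.range (e + 2)).filter (fun i => (e + 1 - i) % 2 = 1),
          pseudoDet (bd i * (bd i)ᵀ)) =
      (gramDet (LinearMap.range (bd 0).mulVecLin) : ℂ) ^ ((-1 : ℤ) ^ e) *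
        ∏ i ∈ (Finset.range (e + 2)).filter (fun i => (e + 1 - i) % 2 = 0),
          pseudoDet (bd i * (bd i)ᵀ) := by
  let D : ℕ → ℂ
    | 0 => gramDet (LinearMap.range (bd 0).mulVecLin)
    | k + 1 => gramDet (LinearMap.ker (bd k).mulVecLin)
  have pseudoDet_eq : ∀ k ≤ e + 1, pseudoDet (bd k * (bd k)ᵀ) = D k * D (k + 1)
    | 0, _ => pseudoDet_self_mul_transpose (bd 0)
    | k + 1, hk => by
      rw [pseudoDet_self_mul_transpose, ← hacyclic k (Nat.le_of_succ_le_succ hk)]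
  have count_eq :
      (torsionForestCount (LinearMap.ker (bd e).mulVecLin) (bd (e + 1)) : ℂ) = D (e + 2) := by
    rw [hacyclic e le_rfl, ← Int.cast_natCast, torsionForestCount_range_eq_gramDet_ker]
  have gramDet_range_ne_zero : D 0 ≠ 0 := Int.cast_ne_zero.mpr (gramDet_ne_zero _)
  rw [count_eq, mul_prod_filter_odd_eq_zpow_mul_prod_filter_even gramDet_range_ne_zero (e + 1)
    pseudoDet_eq, pow_add _ e 2, neg_one_sq, mul_one]

/-- **The alternating-product cellular matrix-tree theorem** (`ℤ`-APC case).
Here `d = e + 1 ≥ 1`; `a (k+1)` is the number of `k`-cells (and `a 0 = 1` accounts for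
the empty cell), and `bd k` is the `k`-th boundary matrix, with `bd 0` the all-ones row.
If `ker_ℤ ∂_k = im_ℤ ∂_{k+1}` for all `0 ≤ k ≤ d - 1`, then
`τ_d(X) · ∏_{d-i odd} λ(∂_i ∂_iᵀ) = ∏_{d-i even} λ(∂_i ∂_iᵀ)`,
i.e. `τ_d(X) = ∏_{i=0}^d λ(∂_i ∂_iᵀ)^((-1)^(d-i))`. -/
theorem alternating_product_tree_count (e : ℕ) (a : ℕ → ℕ) (ha : a 0 = 1)
    (bd : (k : ℕ) → Matrix (Fin (a k)) (Fin (a (k + 1))) ℤ)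
    (h0 : ∀ i j, bd 0 i j = 1)
    (hchain : ∀ k ≤ e, bd k * bd (k + 1) = 0)
    (hacyclic : ∀ k ≤ e,
      LinearMap.ker (bd k).mulVecLin = LinearMap.range (bd (k + 1)).mulVecLin) :
    letI IsForest : Finset (Fin (a (e + 2))) → Prop := fun T =>
      LinearIndependent ℚ (fun τ : T => fun σ => ((bd (e + 1) σ τ.1 : ℤ) : ℚ)) ∧
        T.card = ((bd (e + 1)).map (Int.cast : ℤ → ℚ)).rank
    letI H : Finset (Fin (a (e + 2))) → Type _ := fun T =>
      LinearMap.ker (bd e).mulVecLin ⧸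
        Submodule.comap (LinearMap.ker (bd e).mulVecLin).subtype
          (Submodule.span ℤ ((fun τ => (bd (e + 1))ᵀ τ) '' ↑T))
    letI τd : ℕ := ∑ᶠ T ∈ {T | IsForest T}, (Nat.card (Submodule.torsion ℤ (H T))) ^ 2
    (τd : ℂ) *
        (∏ i ∈ (Finset.range (e + 2)).filter (fun i => (e + 1 - i) % 2 = 1),
          pseudoDet (bd i * (bd i)ᵀ)) =
      ∏ i ∈ (Finset.range (e + 2)).filter (fun i => (e + 1 - i) % 2 = 0),
        pseudoDet (bd i * (bd i)ᵀ) := by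
  have : Subsingleton (Fin (a 0)) := ha ▸ inferInstanceAs (Subsingleton (Fin 1))
  have key := alternating_product_tree_count_general e bd hacyclic
  rwa [TreeCount.gramDet_range_of_forall_eq_one h0, Int.cast_one, _root_.one_zpow, one_mul] at key
end

section
/- Let d ≥ 2 and let ∂_0, …, ∂_d be the boundary matrices of a d-dimensional cell complex X, and suppose ker_ℝ(∂_{d−1}) = im_ℝ(∂_d) and ker_ℝ(∂_{d−2}) = im_ℝ(∂_{d−1}) (i.e., H_{d−1}(X;ℝ) = H_{d−2}(X;ℝ) = 0). Let R be a set of (d−1)-cells such that the columns of ∂_{d−1}|_R form a basis of the column space of ∂_{d−1} (a maximal spanning (d−1)-forest), and let S be the complementary set of (d−1)-cells. Introduce an indeterminate w_σ for each d-cell σ, and let L_S(X;w) be the S×S submatrix of ∂_d·W·∂_dᵀ, where W is the diagonal matrix with entries w_σ. Then, in ℤ[w]: t(ker_ℤ(∂_{d−2})/im_ℤ(∂_{d−1}|_R))² · ∑_T t(ker_ℤ(∂_{d−1})/im_ℤ(∂_d|_T))² ∏_{σ∈T} w_σ = t(ker_ℤ(∂_{d−2})/im_ℤ(∂_{d−1}))²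 · det(L_S(X;w)), the sum being over all maximal spanning d-forests T of X. -/
open Matrix MvPolynomial

/-!
Write `S` for the complement of `R` and `p` for the projection of the integral `(d-1)`-chains onto
`ℤ^S`. By Cauchy–Binet, `det L_S = ∑_T det(∂_{S,T})² ∏_{σ ∈ T} w_σ` over the sets `T` of `|S|`
`d`-cells, and `|S| = rank ∂_d` by exactness. As `R` is independent, `p` is injective on
`ker ∂_{d-1}`, so the nonzero minors are those of the maximal forests `T`, and for these
`|det ∂_{S,T}| = [ℤ^S : p(ker ∂_{d-1})] · [ker ∂_{d-1} : im ∂_d|_T]`. The first index equals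
`[im ∂_{d-1} : im ∂_{d-1}|_R]`, since both are the index of `ker p + ker ∂_{d-1}` in the chains, and
this is `t(ker ∂_{d-2} / im ∂_{d-1}|_R) / t(ker ∂_{d-2} / im ∂_{d-1})`.
-/

namespace CellularForest

section CauchyBinet

variable {s n A : Type*} [Fintype s] [Fintype n]

lemma det_mul_eq_sum_embedding [DecidableEq s] [CommRing A] (M : Matrix s n A) (N : Matrix n s A) :
    (M * N).det = ∑ p : s ↪ n, (M.submatrix id p).det * ∏ i, N (p i) i := by
  have expand : (M * N).det = ∑ p : s → n, (M.submatrix id p).det * ∏ i, N (p i) i := by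
    simp only [det_apply', mul_apply, Finset.prod_univ_sum, Finset.mul_sum, Fintype.piFinset_univ,
      Finset.sum_mul, submatrix_apply, id, Finset.prod_mul_distrib, mul_assoc]
    exact Finset.sum_comm
  rw [expand]
  refine (Fintype.sum_of_injective (fun p : s ↪ n => (p : s → n)) DFunLike.coe_injective
    _ _ (fun p hp => ?_) fun _ => rfl).symm
  have not_injective : ¬ Function.Injective p := fun hinj => hp ⟨⟨p, hinj⟩, rfl⟩
  obtain ⟨i, j, hij, hne⟩ := Function.not_injective_iff.1 not_injective
  rw [det_zero_of_column_eq hne fun k => by simp only [submatrix_apply, hij], zero_mul]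

lemma sum_embedding_map_univ_eq [DecidableEq n] [AddCommMonoid A] {T : Finset n}
    (hT : T.card = Fintype.card s) (f : (s ↪ n) → A) :
    ∑ p : s ↪ n with Finset.univ.map p = T, f p =
      ∑ p : s ↪ T, f (p.trans (Function.Embedding.subtype _)) := by
  symm
  refine Finset.sum_nbij (fun p => p.trans (Function.Embedding.subtype _)) (fun p _ => ?_)
    (fun p _ p' _ h => ?_) (fun p hp => ?_) fun _ _ => rfl
  · refine Finset.mem_filter.2 ⟨Finset.mem_univ _, Finset.eq_of_subset_of_card_le ?_ ?_⟩
    · intro t ht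
      obtain ⟨i, -, rfl⟩ := Finset.mem_map.1 ht
      exact (p i).2
    · rw [Finset.card_map, hT, Finset.card_univ]
  · ext i
    exact DFunLike.congr_fun h i
  · obtain ⟨-, rfl⟩ := Finset.mem_filter.1 hp
    exact ⟨p.codRestrict _ fun i => Finset.mem_map_of_mem p (Finset.mem_univ i),
      Finset.mem_coe.2 (Finset.mem_univ _), rfl⟩

theorem det_mul_eq_sum_powersetCard [DecidableEq s] [CommRing A]
    (M : Matrix s n A) (N : Matrix n s A) :
    (M * N).det = ∑ T ∈ Finset.powersetCard (Fintype.card s) (Finset.univ : Finset n),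
      (M.submatrix id ((↑) : T → n) * N.submatrix ((↑) : T → n) id).det := by
  classical
  rw [det_mul_eq_sum_embedding, ← Finset.sum_fiberwise_of_maps_to
    (g := fun p : s ↪ n => Finset.univ.map p)
    (t := Finset.powersetCard (Fintype.card s) Finset.univ)]
  · refine Finset.sum_congr rfl fun T hT => ?_
    rw [sum_embedding_map_univ_eq (Finset.mem_powersetCard_univ.1 hT), det_mul_eq_sum_embedding]
    rfl
  · intro p _
    rw [Finset.mem_powersetCard_univ, Finset.card_map, Finset.card_univ]

end CauchyBinet

section Laplacian

variable {s n P : Type*} [Fintype n] [CommRing P]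

/-- The weighted Laplacian `E W Eᵀ`, where `W` is the diagonal matrix of the weights `w`. It is
defined entrywise, the integer entries of `E` being cast to the ring of weights. -/
def weightedLaplacian (E : Matrix s n ℤ) (w : n → P) : Matrix s s P :=
  fun i j => ∑ σ, (E i σ : P) * w σ * (E j σ : P)

lemma weightedLaplacian_eq_mul [DecidableEq n] (E : Matrix s n ℤ) (w : n → P) :
    weightedLaplacian E w =
      E.map (Int.cast : ℤ → P) * diagonal w * (E.map (Int.cast : ℤ → P))ᵀ := by
  ext i j
  rw [mul_apply]
  simp only [weightedLaplacian, mul_diagonal, map_apply, transpose_apply]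

variable [Fintype s] [DecidableEq s]

theorem det_weightedLaplacian_eq_sum_powersetCard (E : Matrix s n ℤ) (w : n → P) :
    (weightedLaplacian E w).det =
      ∑ T ∈ Finset.powersetCard (Fintype.card s) (Finset.univ : Finset n),
        (weightedLaplacian (E.submatrix id ((↑) : T → n)) fun τ => w τ).det := by
  classical
  rw [weightedLaplacian_eq_mul, det_mul_eq_sum_powersetCard]
  refine Finset.sum_congr rfl fun T _ => congrArg det ?_
  ext i j
  rw [mul_apply]
  simp only [weightedLaplacian, mul_diagonal, map_apply, transpose_apply, submatrix_apply, id]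

lemma det_weightedLaplacian_of_equiv (E : Matrix s n ℤ) (w : n → P) (g : s ≃ n) :
    (weightedLaplacian E w).det = ((E.submatrix id g).det : P) ^ 2 * ∏ τ, w τ := by
  classical
  have square : weightedLaplacian E w = weightedLaplacian (E.submatrix id g) (w ∘ g) := by
    ext i j
    exact (g.sum_comp fun σ => (E i σ : P) * w σ * (E j σ : P)).symm
  rw [square, weightedLaplacian_eq_mul, det_mul, det_mul, det_diagonal, det_transpose,
    ← Int.cast_det, ← g.prod_comp w]
  simp only [Function.comp_apply]
  ring

end Laplacian

section LinearAlgebra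

lemma rank_map_algebraMap {F K m n : Type*} [Field F] [Field K] [Algebra F K] [Finite m]
    [Fintype n] (A : Matrix m n F) : (A.map (algebraMap F K)).rank = A.rank := by
  obtain ⟨κ, c, hc, hspan, hli⟩ := exists_linearIndependent' F A.col
  have : Fintype κ := @Fintype.ofFinite κ (Finite.of_injective c hc)
  have hliK : LinearIndependent K ((A.map (algebraMap F K)).col ∘ c) :=
    linearIndependent_algebraMap_comp_iff.2 hli
  have hspanK : Submodule.span K (Set.range ((A.map (algebraMap F K)).col ∘ c)) =
      Submodule.span K (Set.range (A.map (algebraMap F K)).col) := by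
    refine le_antisymm (Submodule.span_mono (Set.range_comp_subset_range _ _))
      (Submodule.span_le.2 ?_)
    rintro _ ⟨j, rfl⟩
    have mem_map : (A.map (algebraMap F K)).col j ∈
        (Submodule.span F (Set.range (A.col ∘ c))).map ((Algebra.linearMap F K).compLeft m) :=
      ⟨A.col j, hspan ▸ Submodule.subset_span ⟨j, rfl⟩, rfl⟩
    rw [Submodule.map_span, ← Set.range_comp] at mem_map
    exact Submodule.span_le_restrictScalars F K _ mem_map
  rw [rank_eq_finrank_span_cols, rank_eq_finrank_span_cols, ← hspan, ← hspanK,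
    finrank_span_eq_card hli, finrank_span_eq_card hliK]

lemma rank_map_intCast (K : Type*) {m n : Type*} [Field K] [CharZero K] [Finite m] [Fintype n]
    (A : Matrix m n ℤ) :
    (A.map (Int.cast : ℤ → K)).rank = (A.map (Int.cast : ℤ → ℚ)).rank := by
  rw [← rank_map_algebraMap (K := K) (A.map (Int.cast : ℤ → ℚ)), Matrix.map_map]
  congr 2
  ext x
  simp

lemma linearIndependent_intCast_iff (K : Type*) {ι m : Type*} [Field K] [CharZero K] [Finite m]
    {v : ι → m → ℤ} :
    LinearIndependent K (fun i j => (v i j : K)) ↔ LinearIndependent ℤ v :=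
  linearIndependent_algebraMap_comp_iff (R := ℤ) (S := K) (v := v)

lemma det_ne_zero_iff_linearIndependent_col {s A : Type*} [Fintype s] [DecidableEq s] [CommRing A]
    [IsDomain A] {M : Matrix s s A} : M.det ≠ 0 ↔ LinearIndependent A M.col := by
  rw [← mulVec_injective_iff, ← coe_mulVecLin, injective_iff_map_eq_zero, Ne,
    ← exists_mulVec_eq_zero_iff, not_exists]
  simp only [mulVecLin_apply, not_and, not_imp_not]

lemma mul_eq_zero_of_range_le_ker_map_intCast {F l m n : Type*} [Field F] [CharZero F] [Fintype m]
    [Fintype n] {B : Matrix l m ℤ} {D : Matrix m n ℤ}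
    (h : LinearMap.range (D.map (Int.cast : ℤ → F)).mulVecLin ≤
      LinearMap.ker (B.map (Int.cast : ℤ → F)).mulVecLin) : B * D = 0 := by
  classical
  rw [LinearMap.range_le_ker_iff, ← mulVecLin_mul, ← toLin'_apply',
    LinearEquiv.map_eq_zero_iff] at h
  have cast_mul : (B * D).map (Int.cast : ℤ → F) = 0 :=
    (Matrix.map_mul (f := Int.castRingHom F)).trans h
  exact map_injective Int.cast_injective (cast_mul.trans (Matrix.map_zero _ Int.cast_zero).symm)

end LinearAlgebra

section Lattice

variable {V W U : Type*} [AddCommGroup V] [AddCommGroup W] [AddCommGroup U]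

lemma card_eq_relIndex_comap_mkQ (N : Submodule ℤ V) (Q : Submodule ℤ (V ⧸ N)) :
    Nat.card Q = N.toAddSubgroup.relIndex (Q.comap N.mkQ).toAddSubgroup := by
  have h := AddSubgroup.relIndex_ker (Q.comap N.mkQ).toAddSubgroup N.mkQ.toAddMonoidHom
  rw [← LinearMap.ker_toAddSubgroup, Submodule.ker_mkQ] at h
  rw [h]
  conv_lhs => rw [← Submodule.map_comap_eq_of_surjective N.mkQ_surjective Q]
  rfl

lemma mem_comap_mkQ_torsion_iff {N : Submodule ℤ V} {x : V} :
    x ∈ (Submodule.torsion ℤ (V ⧸ N)).comap N.mkQ ↔ ∃ k : ℤ, k ≠ 0 ∧ k • x ∈ N := by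
  simp only [Submodule.mem_comap, Submodule.mem_torsion_iff, Subtype.exists,
    mem_nonZeroDivisors_iff_ne_zero, Submodule.mkQ_apply, Submonoid.mk_smul,
    ← Submodule.Quotient.mk_smul, Submodule.Quotient.mk_eq_zero, exists_prop]

lemma comap_mkQ_torsion_eq_of_relIndex_ne_zero {N N' : Submodule ℤ V} (hle : N ≤ N')
    (hfin : N.toAddSubgroup.relIndex N'.toAddSubgroup ≠ 0) :
    (Submodule.torsion ℤ (V ⧸ N)).comap N.mkQ = (Submodule.torsion ℤ (V ⧸ N')).comap N'.mkQ := by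
  ext x
  simp only [mem_comap_mkQ_torsion_iff]
  refine ⟨fun ⟨k, hk, hx⟩ => ⟨k, hk, hle hx⟩, fun ⟨k, hk, hx⟩ => ?_⟩
  obtain ⟨j, hj, -, hmem⟩ := AddSubgroup.exists_nsmul_mem_of_relIndex_ne_zero hfin hx
  refine ⟨j * k, mul_ne_zero (Nat.cast_ne_zero.2 hj.ne') hk, ?_⟩
  rw [mul_smul, natCast_zsmul]
  exact hmem.1

theorem card_torsion_quotient_of_le {N N' : Submodule ℤ V} (hle : N ≤ N')
    (hfin : N.toAddSubgroup.relIndex N'.toAddSubgroup ≠ 0) :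
    Nat.card (Submodule.torsion ℤ (V ⧸ N)) =
      N.toAddSubgroup.relIndex N'.toAddSubgroup * Nat.card (Submodule.torsion ℤ (V ⧸ N')) := by
  have le_saturation : N' ≤ (Submodule.torsion ℤ (V ⧸ N')).comap N'.mkQ := fun x hx =>
    mem_comap_mkQ_torsion_iff.2 ⟨1, one_ne_zero, by rwa [one_smul]⟩
  rw [card_eq_relIndex_comap_mkQ, card_eq_relIndex_comap_mkQ,
    comap_mkQ_torsion_eq_of_relIndex_ne_zero hle hfin]
  exact (AddSubgroup.relIndex_mul_relIndex _ _ _ hle le_saturation).symm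

/-- The torsion order `t(K / N)`, defined as that of `K` modulo the preimage of `N` in `K`, so that
`N ≤ K` need not be carried along. -/
noncomputable def torsionOrder (K N : Submodule ℤ V) : ℕ :=
  Nat.card (Submodule.torsion ℤ (K ⧸ N.comap K.subtype))

theorem torsionOrder_eq_relIndex_mul {K N N' : Submodule ℤ V} (hle : N ≤ N') (hle' : N' ≤ K)
    (hfin : N.toAddSubgroup.relIndex N'.toAddSubgroup ≠ 0) :
    torsionOrder K N = N.toAddSubgroup.relIndex N'.toAddSubgroup * torsionOrder K N' := by
  have hindex : (N.comap K.subtype).toAddSubgroup.relIndex (N'.comap K.subtype).toAddSubgroup =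
      N.toAddSubgroup.relIndex N'.toAddSubgroup :=
    AddSubgroup.relIndex_addSubgroupOf (H := N.toAddSubgroup) (K := N'.toAddSubgroup)
      (L := K.toAddSubgroup) hle'
  rw [← hindex] at hfin ⊢
  exact card_torsion_quotient_of_le (Submodule.comap_mono hle) hfin

lemma torsionOrder_self (K : Submodule ℤ V) : torsionOrder K K = 1 := by
  rw [torsionOrder, Submodule.comap_subtype_self, Nat.card_eq_one_iff_unique]
  exact ⟨inferInstance, inferInstance⟩

theorem torsionOrder_eq_relIndex {K N : Submodule ℤ V} (hle : N ≤ K)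
    (hfin : N.toAddSubgroup.relIndex K.toAddSubgroup ≠ 0) :
    torsionOrder K N = N.toAddSubgroup.relIndex K.toAddSubgroup := by
  rw [torsionOrder_eq_relIndex_mul hle le_rfl hfin, torsionOrder_self, mul_one]

lemma index_map_ker_eq_relIndex_map_ker (f : V →ₗ[ℤ] W) (g : V →ₗ[ℤ] U)
    (hf : Function.Surjective f) :
    ((LinearMap.ker g).map f).toAddSubgroup.index =
      ((LinearMap.ker f).map g).toAddSubgroup.relIndex (LinearMap.range g).toAddSubgroup := by
  have comap_eq : ((LinearMap.ker g).map f).comap f = ((LinearMap.ker f).map g).comap g := by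
    rw [Submodule.comap_map_eq, Submodule.comap_map_eq, sup_comm]
  calc ((LinearMap.ker g).map f).toAddSubgroup.index
      = (((LinearMap.ker g).map f).comap f).toAddSubgroup.index :=
        (AddSubgroup.index_comap_of_surjective ((LinearMap.ker g).map f).toAddSubgroup
          (f := f.toAddMonoidHom) hf).symm
    _ = (((LinearMap.ker f).map g).comap g).toAddSubgroup.index := by rw [comap_eq]
    _ = _ := AddSubgroup.index_comap ((LinearMap.ker f).map g).toAddSubgroup g.toAddMonoidHom

lemma relIndex_map_map_of_disjoint_ker (f : V →ₗ[ℤ] W) {N K : Submodule ℤ V} (hle : N ≤ K)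
    (hf : Disjoint (LinearMap.ker f) K) :
    (N.map f).toAddSubgroup.relIndex (K.map f).toAddSubgroup =
      N.toAddSubgroup.relIndex K.toAddSubgroup := by
  have inf_eq : (N.map f).comap f ⊓ K = N := by
    rw [Submodule.comap_map_eq, sup_inf_assoc_of_le _ hle, hf.eq_bot, sup_bot_eq]
  calc (N.map f).toAddSubgroup.relIndex (K.map f).toAddSubgroup
      = ((N.map f).comap f).toAddSubgroup.relIndex K.toAddSubgroup :=
        (AddSubgroup.relIndex_comap (N.map f).toAddSubgroup f.toAddMonoidHom K.toAddSubgroup).symm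
    _ = ((N.map f).comap f ⊓ K).toAddSubgroup.relIndex K.toAddSubgroup :=
        (AddSubgroup.inf_relIndex_right ((N.map f).comap f).toAddSubgroup K.toAddSubgroup).symm
    _ = N.toAddSubgroup.relIndex K.toAddSubgroup := by rw [inf_eq]

lemma index_range_eq_natAbs_det [Module.Free ℤ V] [Module.Finite ℤ V] (f : V →ₗ[ℤ] V)
    (hf : Function.Injective f) :
    (LinearMap.range f).toAddSubgroup.index = (LinearMap.det f).natAbs :=
  (Submodule.natAbs_det_equiv _ (LinearEquiv.ofInjective f hf)).symm

end Lattice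

section Coordinates

variable {l m n : Type*}

/-- The coordinate projection `ℤ^m → ℤ^S`, where `S` is the complement of `R`. -/
def restrictCompl (R : Finset m) : (m → ℤ) →ₗ[ℤ] ({i // i ∉ R} → ℤ) :=
  LinearMap.funLeft ℤ ℤ Subtype.val

lemma restrictCompl_surjective (R : Finset m) : Function.Surjective (restrictCompl R) :=
  LinearMap.funLeft_surjective_of_injective ℤ ℤ _ Subtype.val_injective

lemma mem_ker_restrictCompl {R : Finset m} {x : m → ℤ} :
    x ∈ LinearMap.ker (restrictCompl R) ↔ ∀ i ∉ R, x i = 0 := by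
  simp only [LinearMap.mem_ker, funext_iff, Subtype.forall]
  rfl

/-- The lattice `im_ℤ(B|_R)` spanned by the columns of `B` indexed by `R`. -/
def columnLattice (B : Matrix l m ℤ) (R : Finset m) : Submodule ℤ (l → ℤ) :=
  Submodule.span ℤ (B.col '' R)

/-- The submatrix of `D` on the rows outside `R`. -/
def deleteRows (D : Matrix m n ℤ) (R : Finset m) : Matrix {i // i ∉ R} n ℤ :=
  D.submatrix Subtype.val id

lemma mulVec_eq_sum_of_mem_ker_restrictCompl [Fintype m] (B : Matrix l m ℤ) {R : Finset m}
    {x : m → ℤ} (hx : x ∈ LinearMap.ker (restrictCompl R)) :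
    B *ᵥ x = ∑ ρ ∈ R, x ρ • B.col ρ := by
  rw [mulVec_eq_sum]
  simp only [op_smul_eq_smul]
  refine (Finset.sum_subset (Finset.subset_univ R) fun i _ hi => ?_).symm
  rw [mem_ker_restrictCompl.1 hx i hi, zero_smul]

lemma columnLattice_eq_map_ker_restrictCompl [Fintype m] (B : Matrix l m ℤ) (R : Finset m) :
    columnLattice B R = (LinearMap.ker (restrictCompl R)).map B.mulVecLin := by
  classical
  apply le_antisymm
  · refine Submodule.span_le.2 ?_
    rintro _ ⟨ρ, hρ, rfl⟩
    refine ⟨Pi.single ρ 1, mem_ker_restrictCompl.2 fun i hi => ?_, mulVec_single_one B ρ⟩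
    exact Pi.single_eq_of_ne (fun hiρ : i = ρ => hi (hiρ ▸ hρ)) 1
  · rintro _ ⟨x, hx, rfl⟩
    rw [mulVecLin_apply, mulVec_eq_sum_of_mem_ker_restrictCompl B hx]
    exact Submodule.sum_mem _ fun ρ hρ =>
      Submodule.smul_mem _ _ (Submodule.subset_span ⟨ρ, hρ, rfl⟩)

lemma columnLattice_le_range [Fintype m] (B : Matrix l m ℤ) (R : Finset m) :
    columnLattice B R ≤ LinearMap.range B.mulVecLin := by
  rw [columnLattice_eq_map_ker_restrictCompl]
  exact LinearMap.map_le_range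

lemma range_mulVecLin_le_ker [Fintype m] [Fintype n] {B : Matrix l m ℤ} {D : Matrix m n ℤ}
    (hBD : B * D = 0) :
    LinearMap.range D.mulVecLin ≤ LinearMap.ker B.mulVecLin := by
  rw [LinearMap.range_le_ker_iff, ← mulVecLin_mul, hBD, mulVecLin_zero]

lemma columnLattice_le_ker [Fintype m] {B : Matrix l m ℤ} {D : Matrix m n ℤ} (hBD : B * D = 0)
    (T : Finset n) : columnLattice D T ≤ LinearMap.ker B.mulVecLin := by
  refine Submodule.span_le.2 ?_
  rintro _ ⟨τ, -, rfl⟩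
  exact congrArg (fun M => M.col τ) hBD

lemma disjoint_ker_restrictCompl_ker_mulVecLin [Fintype m] {B : Matrix l m ℤ} {R : Finset m}
    (hR : LinearIndependent ℤ fun ρ : R => B.col ρ) :
    Disjoint (LinearMap.ker (restrictCompl R)) (LinearMap.ker B.mulVecLin) := by
  refine Submodule.disjoint_def.2 fun x hxR hxB => ?_
  have relation : ∑ ρ : R, x ρ • B.col ρ = 0 := by
    rw [Finset.sum_coe_sort R fun ρ => x ρ • B.col ρ,
      ← mulVec_eq_sum_of_mem_ker_restrictCompl B hxR]
    exact hxB
  ext i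
  by_cases hi : i ∈ R
  · exact Fintype.linearIndependent_iff.1 hR (fun ρ => x ρ) relation ⟨i, hi⟩
  · exact mem_ker_restrictCompl.1 hxR i hi

lemma range_mulVecLin_deleteRows_submatrix [Fintype m] [DecidableEq m]
    (D : Matrix m n ℤ) (R : Finset m) {T : Finset n} (g : {i // i ∉ R} ≃ T) :
    LinearMap.range ((deleteRows D R).submatrix id fun i => (g i : n)).mulVecLin =
      (columnLattice D T).map (restrictCompl R) := by
  have hcols : ((deleteRows D R).submatrix id fun i => (g i : n)).col =
      (fun τ : T => restrictCompl R (D.col τ)) ∘ g := rfl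
  rw [range_mulVecLin, columnLattice, Submodule.map_span, Set.image_image, hcols,
    g.surjective.range_comp, Set.image_eq_range]
  rfl

lemma det_weightedLaplacian_deleteRows_submatrix {P : Type*} [CommRing P] [Fintype m]
    [DecidableEq m] (D : Matrix m n ℤ) (R : Finset m) {T : Finset n} (w : n → P)
    (g : {i // i ∉ R} ≃ T) :
    (weightedLaplacian ((deleteRows D R).submatrix id ((↑) : T → n)) fun τ => w τ).det =
      (((deleteRows D R).submatrix id fun i => (g i : n)).det : P) ^ 2 * ∏ σ ∈ T, w σ := by
  rw [det_weightedLaplacian_of_equiv _ _ g, Finset.prod_coe_sort T w]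
  rfl

end Coordinates

section Minors

variable {l m n : Type*} [Fintype m] [DecidableEq m]
  {B : Matrix l m ℤ} {D : Matrix m n ℤ} {R : Finset m} {T : Finset n}

theorem det_deleteRows_ne_zero_iff (hBD : B * D = 0)
    (hR : LinearIndependent ℤ fun ρ : R => B.col ρ) (g : {i // i ∉ R} ≃ T) :
    ((deleteRows D R).submatrix id fun i => (g i : n)).det ≠ 0 ↔
      LinearIndependent ℤ fun τ : T => D.col τ := by
  have hdisj : Disjoint (Submodule.span ℤ (Set.range fun τ : T => D.col τ))
      (LinearMap.ker (restrictCompl R)) := by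
    have span_eq : Submodule.span ℤ (Set.range fun τ : T => D.col τ) = columnLattice D T := by
      rw [columnLattice, Set.image_eq_range]
      rfl
    rw [span_eq]
    exact (disjoint_ker_restrictCompl_ker_mulVecLin hR).symm.mono_left (columnLattice_le_ker hBD T)
  rw [det_ne_zero_iff_linearIndependent_col,
    ← (restrictCompl R).linearIndependent_iff_of_disjoint hdisj, ← linearIndependent_equiv g]
  rfl

theorem natAbs_det_deleteRows_eq (hBD : B * D = 0)
    (hR : LinearIndependent ℤ fun ρ : R => B.col ρ) (hT : LinearIndependent ℤ fun τ : T => D.col τ)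
    (g : {i // i ∉ R} ≃ T) :
    ((deleteRows D R).submatrix id fun i => (g i : n)).det.natAbs =
      (columnLattice D T).toAddSubgroup.relIndex (LinearMap.ker B.mulVecLin).toAddSubgroup *
      (columnLattice B R).toAddSubgroup.relIndex (LinearMap.range B.mulVecLin).toAddSubgroup := by
  have hle := columnLattice_le_ker hBD T
  have hinj := mulVec_injective_iff.2
    (det_ne_zero_iff_linearIndependent_col.1 ((det_deleteRows_ne_zero_iff hBD hR g).2 hT))
  rw [← LinearMap.det_toLin', ← index_range_eq_natAbs_det _ hinj, toLin'_apply',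
    range_mulVecLin_deleteRows_submatrix, columnLattice_eq_map_ker_restrictCompl B R,
    ← index_map_ker_eq_relIndex_map_ker _ _ (restrictCompl_surjective R),
    ← relIndex_map_map_of_disjoint_ker _ hle (disjoint_ker_restrictCompl_ker_mulVecLin hR)]
  exact (AddSubgroup.relIndex_mul_index (Submodule.map_mono hle)).symm

theorem torsionOrder_mul_torsionOrder_eq {K : Submodule ℤ (l → ℤ)}
    (hK : LinearMap.range B.mulVecLin ≤ K) (hBD : B * D = 0)
    (hR : LinearIndependent ℤ fun ρ : R => B.col ρ) (hT : LinearIndependent ℤ fun τ : T => D.col τ)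
    (g : {i // i ∉ R} ≃ T) :
    torsionOrder K (columnLattice B R) *
        torsionOrder (LinearMap.ker B.mulVecLin) (columnLattice D T) =
      torsionOrder K (LinearMap.range B.mulVecLin) *
        ((deleteRows D R).submatrix id fun i => (g i : n)).det.natAbs := by
  have hdet := natAbs_det_deleteRows_eq hBD hR hT g
  have hne := Int.natAbs_ne_zero.2 ((det_deleteRows_ne_zero_iff hBD hR g).2 hT)
  rw [hdet] at hne
  rw [hdet, torsionOrder_eq_relIndex_mul (columnLattice_le_range B R) hK (right_ne_zero_of_mul hne),
    torsionOrder_eq_relIndex (columnLattice_le_ker hBD T) (left_ne_zero_of_mul hne)]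
  ring

end Minors

section Forests

variable {l m n : Type*} [Fintype m]

/-- `T` is a maximal spanning forest of the complex with boundary matrix `B`: the columns of `B`
indexed by `T` are independent over `ℚ` and `T` has as many elements as the rank of `B`. -/
def IsMaximalForest (B : Matrix l m ℤ) (T : Finset m) : Prop :=
  LinearIndependent ℚ (fun τ : T => fun σ => (B σ τ : ℚ)) ∧
    T.card = (B.map (Int.cast : ℤ → ℚ)).rank

lemma isMaximalForest_of_span_eq {B : Matrix l m ℤ} {R : Finset m}
    (hli : LinearIndependent ℚ (fun ρ : R => fun σ => (B σ ρ : ℚ)))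
    (hspan : Submodule.span ℚ (Set.range (fun ρ : R => fun σ => (B σ ρ : ℚ))) =
      Submodule.span ℚ (Set.range (fun ρ : m => fun σ => (B σ ρ : ℚ)))) :
    IsMaximalForest B R := by
  refine ⟨hli, ?_⟩
  have hcard := finrank_span_eq_card hli
  rw [hspan, Fintype.card_coe] at hcard
  rw [rank_eq_finrank_span_cols, ← hcard]
  rfl

namespace IsMaximalForest

lemma linearIndependent_col [Finite l] {B : Matrix l m ℤ} {R : Finset m}
    (hR : IsMaximalForest B R) : LinearIndependent ℤ fun ρ : R => B.col ρ :=
  (linearIndependent_intCast_iff ℚ).1 hR.1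

variable {F P : Type*} [Field F] [CharZero F] [CommRing P] [Finite l] [Fintype n]
  {B : Matrix l m ℤ} {D : Matrix m n ℤ} {R : Finset m} {T : Finset n}

lemma card_compl_eq_rank [DecidableEq m] (hR : IsMaximalForest B R)
    (hex : LinearMap.ker (B.map (Int.cast : ℤ → F)).mulVecLin =
      LinearMap.range (D.map (Int.cast : ℤ → F)).mulVecLin) :
    Fintype.card {i // i ∉ R} = (D.map (Int.cast : ℤ → ℚ)).rank := by
  have rank_nullity := (B.map (Int.cast : ℤ → F)).mulVecLin.finrank_range_add_finrank_ker
  rw [hex, Module.finrank_fintype_fun_eq_card] at rank_nullity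
  change (B.map (Int.cast : ℤ → F)).rank + (D.map (Int.cast : ℤ → F)).rank = _ at rank_nullity
  rw [rank_map_intCast F B, rank_map_intCast F D, ← hR.2] at rank_nullity
  rw [Fintype.card_subtype_compl, Fintype.card_coe]
  omega

lemma nonempty_compl_equiv (hR : IsMaximalForest B R)
    (hex : LinearMap.ker (B.map (Int.cast : ℤ → F)).mulVecLin =
      LinearMap.range (D.map (Int.cast : ℤ → F)).mulVecLin)
    (hT : T.card = (D.map (Int.cast : ℤ → ℚ)).rank) : Nonempty ({i // i ∉ R} ≃ T) := by
  classical
  rw [← Fintype.card_eq, hR.card_compl_eq_rank hex, Fintype.card_coe, hT]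

theorem det_weightedLaplacian_deleteRows_eq_finsum [DecidableEq m] (hR : IsMaximalForest B R)
    (hex : LinearMap.ker (B.map (Int.cast : ℤ → F)).mulVecLin =
      LinearMap.range (D.map (Int.cast : ℤ → F)).mulVecLin) (w : n → P) :
    (weightedLaplacian (deleteRows D R) w).det =
      ∑ᶠ T ∈ {T | IsMaximalForest D T},
        (weightedLaplacian ((deleteRows D R).submatrix id ((↑) : T → n)) fun τ => w τ).det := by
  classical
  have hBD : B * D = 0 := mul_eq_zero_of_range_le_ker_map_intCast hex.ge
  rw [det_weightedLaplacian_eq_sum_powersetCard]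
  refine (finsum_mem_eq_sum_of_inter_support_eq _
    (Set.ext fun T => and_congr_left fun hsupp => ?_)).symm
  rw [Finset.mem_coe, Finset.mem_powersetCard_univ, hR.card_compl_eq_rank hex]
  refine ⟨And.right, fun hcard => ⟨?_, hcard⟩⟩
  obtain ⟨g⟩ := hR.nonempty_compl_equiv hex hcard
  refine (linearIndependent_intCast_iff ℚ).2
    ((det_deleteRows_ne_zero_iff hBD hR.linearIndependent_col g).1 fun hdet => hsupp ?_)
  exact (det_weightedLaplacian_deleteRows_submatrix D R w g).trans
    (by rw [hdet, Int.cast_zero, zero_pow two_ne_zero, zero_mul])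

theorem torsionOrder_sq_mul_eq [DecidableEq m] (hR : IsMaximalForest B R)
    {K : Submodule ℤ (l → ℤ)} (hK : LinearMap.range B.mulVecLin ≤ K)
    (hex : LinearMap.ker (B.map (Int.cast : ℤ → F)).mulVecLin =
      LinearMap.range (D.map (Int.cast : ℤ → F)).mulVecLin) (w : n → P)
    (hT : IsMaximalForest D T) :
    ((torsionOrder K (columnLattice B R) ^ 2 : ℕ) : P) *
        (((torsionOrder (LinearMap.ker B.mulVecLin) (columnLattice D T) ^ 2 : ℕ) : P) *
          ∏ σ ∈ T, w σ) =
      ((torsionOrder K (LinearMap.range B.mulVecLin) ^ 2 : ℕ) : P) *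
        (weightedLaplacian ((deleteRows D R).submatrix id ((↑) : T → n)) fun τ => w τ).det := by
  have hBD : B * D = 0 := mul_eq_zero_of_range_le_ker_map_intCast hex.ge
  obtain ⟨g⟩ := hR.nonempty_compl_equiv hex hT.2
  have hprod :=
    torsionOrder_mul_torsionOrder_eq hK hBD hR.linearIndependent_col hT.linearIndependent_col g
  rw [det_weightedLaplacian_deleteRows_submatrix D R w g, ← mul_assoc, ← mul_assoc]
  congr 1
  rw [← Int.cast_pow, ← Int.natAbs_sq, ← Nat.cast_pow, Int.cast_natCast, ← Nat.cast_mul,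
    ← Nat.cast_mul, ← mul_pow, ← mul_pow, hprod]

end IsMaximalForest

end Forests

end CellularForest

open CellularForest in
theorem weighted_cellular_matrix_forest_general {F P k l m n : Type*} [Field F] [CharZero F]
    [CommRing P] [Fintype l] [Fintype m] [DecidableEq m] [Fintype n]
    {A : Matrix k l ℤ} {B : Matrix l m ℤ} {D : Matrix m n ℤ} (hAB : A * B = 0)
    (hex : LinearMap.ker (B.map (Int.cast : ℤ → F)).mulVecLin =
      LinearMap.range (D.map (Int.cast : ℤ → F)).mulVecLin)
    {R : Finset m} (hR : IsMaximalForest B R) (w : n → P) :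
    ((torsionOrder (LinearMap.ker A.mulVecLin) (columnLattice B R) ^ 2 : ℕ) : P) *
        (∑ᶠ T ∈ {T | IsMaximalForest D T},
          ((torsionOrder (LinearMap.ker B.mulVecLin) (columnLattice D T) ^ 2 : ℕ) : P) *
            ∏ σ ∈ T, w σ) =
      ((torsionOrder (LinearMap.ker A.mulVecLin) (LinearMap.range B.mulVecLin) ^ 2 : ℕ) : P) *
        (weightedLaplacian (deleteRows D R) w).det := by
  rw [hR.det_weightedLaplacian_deleteRows_eq_finsum hex, mul_finsum_mem' _ _ (Set.toFinite _),
    mul_finsum_mem' _ _ (Set.toFinite _)]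
  exact finsum_mem_congr rfl fun T hT =>
    hR.torsionOrder_sq_mul_eq (range_mulVecLin_le_ker hAB) hex w hT

/-- **The weighted cellular matrix-forest theorem** (reduced-Laplacian form).
Here `d = e + 2 ≥ 2`; `a (k+1)` is the number of `k`-cells (and `a 0 = 1`), `bd k` is the
`k`-th boundary matrix (`bd 0` the all-ones row), `H_{d-1}(X;ℝ) = H_{d-2}(X;ℝ) = 0`,
`R` is a maximal spanning `(d-1)`-forest (its columns of `∂_{d-1}` are a basis of the
column space of `∂_{d-1}`) and `S` its complement.  Then in `ℤ[w_σ : σ a d-cell]`: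
`t(ker ∂_{d-2}/im ∂_{d-1}|_R)² · ∑_T t(ker ∂_{d-1}/im ∂_d|_T)² ∏_{σ∈T} w_σ
  = t(ker ∂_{d-2}/im ∂_{d-1})² · det L_S(X; w)`. -/
theorem weighted_cellular_matrix_forest (e : ℕ) (a : ℕ → ℕ) (ha : a 0 = 1)
    (bd : (k : ℕ) → Matrix (Fin (a k)) (Fin (a (k + 1))) ℤ)
    (h0 : ∀ i j, bd 0 i j = 1)
    (hchain : ∀ k ≤ e + 1, bd k * bd (k + 1) = 0)
    (hd1 : LinearMap.ker ((bd (e + 1)).map (Int.cast : ℤ → ℝ)).mulVecLin =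
      LinearMap.range ((bd (e + 2)).map (Int.cast : ℤ → ℝ)).mulVecLin)
    (hd2 : LinearMap.ker ((bd e).map (Int.cast : ℤ → ℝ)).mulVecLin =
      LinearMap.range ((bd (e + 1)).map (Int.cast : ℤ → ℝ)).mulVecLin)
    (R : Finset (Fin (a (e + 2))))
    (hR1 : LinearIndependent ℚ (fun ρ : R => fun σ => ((bd (e + 1) σ ρ.1 : ℤ) : ℚ)))
    (hR2 : Submodule.span ℚ
        (Set.range (fun ρ : R => fun σ => ((bd (e + 1) σ ρ.1 : ℤ) : ℚ))) =
      Submodule.span ℚ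
        (Set.range (fun ρ : Fin (a (e + 2)) => fun σ => ((bd (e + 1) σ ρ : ℤ) : ℚ)))) :
    letI P := MvPolynomial (Fin (a (e + 3))) ℤ
    -- the S×S reduced weighted Laplacian, S = complement of R
    letI LS : Matrix {i : Fin (a (e + 2)) // i ∉ R} {i : Fin (a (e + 2)) // i ∉ R} P :=
      fun i j => ∑ σ : Fin (a (e + 3)),
        ((bd (e + 2) i.1 σ : ℤ) : P) * X σ * ((bd (e + 2) j.1 σ : ℤ) : P)
    letI IsForest : Finset (Fin (a (e + 3))) → Prop := fun T =>
      LinearIndependent ℚ (fun τ : T => fun σ => ((bd (e + 2) σ τ.1 : ℤ) : ℚ)) ∧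
        T.card = ((bd (e + 2)).map (Int.cast : ℤ → ℚ)).rank
    -- t(ker ∂_{d-1} / im ∂_d|_T)
    letI tT : Finset (Fin (a (e + 3))) → ℕ := fun T =>
      Nat.card (Submodule.torsion ℤ
        (LinearMap.ker (bd (e + 1)).mulVecLin ⧸
          Submodule.comap (LinearMap.ker (bd (e + 1)).mulVecLin).subtype
            (Submodule.span ℤ ((fun τ => (bd (e + 2))ᵀ τ) '' ↑T))))
    -- t(ker ∂_{d-2} / im ∂_{d-1}|_R)
    letI tR : ℕ :=
      Nat.card (Submodule.torsion ℤ
        (LinearMap.ker (bd e).mulVecLin ⧸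
          Submodule.comap (LinearMap.ker (bd e).mulVecLin).subtype
            (Submodule.span ℤ ((fun ρ => (bd (e + 1))ᵀ ρ) '' ↑R))))
    -- t(ker ∂_{d-2} / im ∂_{d-1})
    letI tX : ℕ :=
      Nat.card (Submodule.torsion ℤ
        (LinearMap.ker (bd e).mulVecLin ⧸
          Submodule.comap (LinearMap.ker (bd e).mulVecLin).subtype
            (LinearMap.range (bd (e + 1)).mulVecLin)))
    ((tR ^ 2 : ℕ) : P) *
        (∑ᶠ T ∈ {T | IsForest T}, ((tT T ^ 2 : ℕ) : P) * ∏ σ ∈ T, X σ) =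
      ((tX ^ 2 : ℕ) : P) * LS.det := by
  exact weighted_cellular_matrix_forest_general (hchain e (by omega)) hd1
    (CellularForest.isMaximalForest_of_span_eq hR1 hR2) X
end

section
/- Let d ≥ 2 and let ∂_0, …, ∂_d be the boundary matrices of a d-dimensional cell complex X, and suppose ker_ℝ(∂_{d−1}) = im_ℝ(∂_d) and ker_ℝ(∂_{d−2}) = im_ℝ(∂_{d−1}) (i.e., H_{d−1}(X;ℝ) = H_{d−2}(X;ℝ) = 0). Then τ_{d−1}(X) · τ_d(X) = t(ker_ℤ(∂_{d−2})/im_ℤ(∂_{d−1}))² · λ(∂_d ∂_dᵀ), where λ denotes the pseudodeterminant of the real matrix ∂_d ∂_dᵀ (the up-down Laplacian in dimension d−1). -/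
open Matrix

/-!
Write `A = ∂_{d-1}`, `B = ∂_d` and `r = rank B`. Since `B * Bᵀ` is symmetric of rank `r`, its
pseudodeterminant is the `r`-th elementary symmetric function of its eigenvalues, i.e. the sum of
its principal `r`-minors, and Cauchy–Binet turns this into the sum of the squares of all `r`-minors
of `B`. The minor in rows `S` and columns `T` is, up to sign, the index in `ℤ^S` of the projection
of the column span of `B_T`. This index factors as `[im A : im A_{Sᶜ}] * [ker A : im B_T]`, where an
infinite index counts as `0`; this happens exactly when `Sᶜ`, respectively `T`, is not a forest. The
sum over `S` and `T` is therefore a product of two forest counts, and replacing `im A` by the kernel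
of `C = ∂_{d-2}` in the first one multiplies it by the torsion factor `[ker C : im A] ^ 2`.
-/

namespace MatrixForest

open Module Polynomial

section Rank

variable {R K ι m n p : Type*} [CommRing R] [Field K] [Algebra R K]

theorem finrank_range_add_finrank_ker [IsDomain R] {M N : Type*} [AddCommGroup M]
    [AddCommGroup N] [Module R M] [Module R N] [Module.Finite R M] (f : M →ₗ[R] N) :
    finrank R (LinearMap.range f) + finrank R (LinearMap.ker f) = finrank R M := by
  rw [← f.quotKerEquivRange.finrank_eq, Submodule.finrank_quotient_add_finrank]

theorem disjoint_ker_of_finrank_map_eq [IsDomain R] {M N : Type*} [AddCommGroup M]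
    [AddCommGroup N] [Module R M] [Module R N] [IsTorsionFree R M] (f : M →ₗ[R] N)
    (L : Submodule R M) [Module.Finite R L] (h : finrank R (L.map f) = finrank R L) :
    Disjoint L (LinearMap.ker f) := by
  have rank_nullity := finrank_range_add_finrank_ker (f.domRestrict L)
  rw [LinearMap.range_domRestrict, h, Nat.add_eq_left] at rank_nullity
  have rank_ker : Module.rank R (LinearMap.ker (f.domRestrict L)) = 0 := by
    rw [← Submodule.finrank_eq_rank, rank_nullity, Nat.cast_zero]
  rwa [Submodule.rank_eq_zero, LinearMap.ker_domRestrict,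
    ← Submodule.disjoint_iff_comap_eq_bot] at rank_ker

theorem finrank_le_finrank_of_algebraMap_comp_mem [FaithfulSMul R K] [Finite ι]
    {N : Submodule R (ι → R)} {P : Submodule K (ι → K)}
    (h : ∀ x ∈ N, algebraMap R K ∘ x ∈ P) : finrank R N ≤ finrank K P := by
  obtain ⟨s, hs_card, hs⟩ := exists_finset_linearIndependent_of_le_finrank (R := R) (M := N) le_rfl
  have hs' : LinearIndependent K fun x : s ↦ algebraMap R K ∘ (x : N).1 :=
    linearIndependent_algebraMap_comp_iff.2 (hs.map' N.subtype N.ker_subtype)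
  have hsP : LinearIndependent K fun x : s ↦ (⟨_, h _ (x : N).2⟩ : P) := .of_comp P.subtype hs'
  simpa [hs_card] using hsP.fintype_card_le_finrank

theorem rank_add_finrank_ker_mulVecLin [IsDomain R] [Fintype n] (A : Matrix m n R) :
    A.rank + finrank R (LinearMap.ker A.mulVecLin) = Fintype.card n := by
  rw [rank, finrank_range_add_finrank_ker, finrank_fintype_fun_eq_card]

theorem rank_map_algebraMap [FaithfulSMul R K] [Fintype n] [Finite m] (A : Matrix m n R) :
    (A.map (algebraMap R K)).rank = A.rank := by
  have : IsDomain R := (FaithfulSMul.algebraMap_injective R K).isDomain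
  have rank_le : A.rank ≤ (A.map (algebraMap R K)).rank := by
    refine finrank_le_finrank_of_algebraMap_comp_mem ?_
    rintro _ ⟨v, rfl⟩
    exact ⟨algebraMap R K ∘ v, funext fun i ↦ (RingHom.map_mulVec (algebraMap R K) A v i).symm⟩
  have nullity_le : finrank R (LinearMap.ker A.mulVecLin) ≤
      finrank K (LinearMap.ker (A.map (algebraMap R K)).mulVecLin) := by
    refine finrank_le_finrank_of_algebraMap_comp_mem fun v hv ↦ funext fun i ↦ ?_
    have hv : A *ᵥ v = 0 := hv
    have := RingHom.map_mulVec (algebraMap R K) A v i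
    rw [hv, Pi.zero_apply, map_zero] at this
    exact this.symm
  have rank_nullity := rank_add_finrank_ker_mulVecLin A
  have rank_nullity_map := rank_add_finrank_ker_mulVecLin (A.map (algebraMap R K))
  omega

variable [CharZero K] [Fintype n]

theorem rank_map_intCast [Finite m] (A : Matrix m n ℤ) :
    (A.map (Int.cast : ℤ → K)).rank = A.rank :=
  rank_map_algebraMap (K := K) A

theorem rank_add_rank_eq_card_of_ker_eq_range [Finite m] [Fintype p] {A : Matrix m n ℤ}
    {B : Matrix n p ℤ}
    (h : LinearMap.ker (A.map (Int.cast : ℤ → K)).mulVecLin =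
      LinearMap.range (B.map (Int.cast : ℤ → K)).mulVecLin) :
    A.rank + B.rank = Fintype.card n := by
  rw [← rank_map_intCast (K := K) A, ← rank_map_intCast (K := K) B,
    ← rank_add_finrank_ker_mulVecLin (A.map (Int.cast : ℤ → K)), h, ← rank]

theorem mul_eq_zero_of_ker_eq_range [Fintype p] {A : Matrix m n ℤ} {B : Matrix n p ℤ}
    (h : LinearMap.ker (A.map (Int.cast : ℤ → K)).mulVecLin =
      LinearMap.range (B.map (Int.cast : ℤ → K)).mulVecLin) :
    A * B = 0 := by
  have map_mul_map : A.map (Int.cast : ℤ → K) * B.map (Int.cast : ℤ → K) = 0 := by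
    refine mulVec_injective (funext fun v ↦ ?_)
    have : B.map Int.cast *ᵥ v ∈ LinearMap.ker (A.map (Int.cast : ℤ → K)).mulVecLin :=
      h ▸ ⟨v, rfl⟩
    simpa using this
  refine map_injective (Int.cast_injective (α := K)) ?_
  simpa using (Matrix.map_mul (f := Int.castRingHom K)).trans map_mul_map

end Rank

section PseudoDet

variable {R n p : Type*} [CommRing R] [DecidableEq p]

/-- The square of the minor of `B` in rows `S` and columns `T`, encoded as a Gram determinant to
avoid choosing a bijection `S ≃ T`. It is the square of a minor only when `S.card = T.card`. -/
def sqMinor (B : Matrix n p R) (S : Finset n) (T : Finset p) : R :=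
  letI Q := B.submatrix (Subtype.val : S → n) (Subtype.val : T → p)
  (Qᵀ * Q).det

variable [Fintype n]

theorem sum_powersetCard_prod_eq_prod_ne_zero [DecidableEq R] (f : n → R) :
    ∑ s ∈ Finset.univ.powersetCard (Finset.univ.filter (f · ≠ 0)).card, ∏ i ∈ s, f i =
      ∏ i with f i ≠ 0, f i := by
  refine Finset.sum_eq_single _ (fun s hs hne ↦ ?_) (by simp)
  by_contra hprod
  refine hne (Finset.eq_of_subset_of_card_le (fun i hi ↦ ?_) (Finset.mem_powersetCard.1 hs).2.ge)
  simp only [Finset.mem_filter_univ]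
  exact fun h0 ↦ hprod (Finset.prod_eq_zero hi h0)

variable [DecidableEq n] [Fintype p]

theorem det_mul_transpose_eq_sum_det_transpose_mul (M : Matrix n p R) :
    (M * Mᵀ).det = ∑ T ∈ Finset.univ.powersetCard (Fintype.card n),
      ((M.submatrix id (Subtype.val : T → p))ᵀ * M.submatrix id (Subtype.val : T → p)).det := by
  have coeff_eq := congr_arg (coeff · (Fintype.card p)) (charpoly_mul_comm' M Mᵀ)
  simp only [coeff_X_pow_mul', le_refl, if_true, Nat.sub_self] at coeff_eq
  rw [det_eq_sign_charpoly_coeff, coeff_eq]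
  split_ifs with h
  · rw [charpoly_coeff_eq_sum_minors _ _ h, ← mul_assoc, ← mul_pow]
    simp only [mul_neg, mul_one, neg_neg, one_pow, one_mul]
    rfl
  · rw [Finset.powersetCard_eq_empty.2 (by simpa using h), Finset.sum_empty, mul_zero]

theorem sum_principalMinors_mul_transpose (B : Matrix n p R) (k : ℕ) :
    ∑ S ∈ Finset.univ.powersetCard k,
        ((B * Bᵀ).submatrix (Subtype.val : S → n) Subtype.val).det =
      ∑ S ∈ Finset.univ.powersetCard k, ∑ T ∈ Finset.univ.powersetCard k, sqMinor B S T := by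
  refine Finset.sum_congr rfl fun S hS ↦ ?_
  have := det_mul_transpose_eq_sum_det_transpose_mul (B.submatrix (Subtype.val : S → n) id)
  rwa [Fintype.card_coe, (Finset.mem_powersetCard.1 hS).2] at this

theorem prod_roots_charpoly_ne_zero_of_isHermitian {M : Matrix n n ℂ} (hM : M.IsHermitian) :
    (M.charpoly.roots.filter (· ≠ 0)).prod = ∑ S ∈ Finset.univ.powersetCard M.rank,
      (M.submatrix (Subtype.val : S → n) Subtype.val).det := by
  set μ : n → ℂ := RCLike.ofReal ∘ hM.eigenvalues
  have hroots : M.charpoly.roots = Finset.univ.val.map μ := hM.roots_charpoly_eq_eigenvalues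
  have hrank : M.rank = (Finset.univ.filter (μ · ≠ 0)).card := by
    rw [hM.rank_eq_card_non_zero_eigs, Fintype.card_subtype]
    simp [μ]
  have hle : M.rank ≤ Fintype.card n := M.rank_le_card_width
  have hcoeff := charpoly_coeff_eq_sum_minors M M.rank hle
  have hvieta := coeff_eq_esymm_roots_of_splits (IsAlgClosed.splits M.charpoly)
    (k := Fintype.card n - M.rank) (by simp)
  rw [hcoeff, charpoly_natDegree_eq_dim, Nat.sub_sub_self hle, M.charpoly_monic.leadingCoeff,
    one_mul] at hvieta
  rw [mul_left_cancel₀ (by simp) hvieta, hroots, Finset.esymm_map_val, hrank,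
    sum_powersetCard_prod_eq_prod_ne_zero, Multiset.filter_map]
  rfl

open scoped ComplexOrder in
theorem pseudoDet_mul_transpose (B : Matrix n p ℤ) :
    pseudoDet (B * Bᵀ) = ((∑ S ∈ Finset.univ.powersetCard B.rank,
      ∑ T ∈ Finset.univ.powersetCard B.rank, sqMinor B S T : ℤ) : ℂ) := by
  let Bℂ : Matrix n p ℂ := B.map Int.cast
  have map_eq : (B * Bᵀ).map (Int.cast : ℤ → ℂ) = Bℂ * Bℂᴴ := by
    ext; simp [Bℂ, mul_apply]
  have rank_eq : ((B * Bᵀ).map (Int.cast : ℤ → ℂ)).rank = B.rank := by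
    rw [map_eq, rank_self_mul_conjTranspose, rank_map_intCast]
  have isHermitian : ((B * Bᵀ).map (Int.cast : ℤ → ℂ)).IsHermitian := by
    rw [map_eq]; exact isHermitian_mul_conjTranspose_self _
  rw [pseudoDet, prod_roots_charpoly_ne_zero_of_isHermitian isHermitian, rank_eq,
    ← sum_principalMinors_mul_transpose, Int.cast_sum]
  exact Finset.sum_congr rfl fun S _ ↦ ((Int.castRingHom ℂ).map_det _).symm

end PseudoDet

section Index

theorem index_range_mulVecLin {n : Type*} [Fintype n] [DecidableEq n] (M : Matrix n n ℤ) :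
    (LinearMap.range M.mulVecLin).toAddSubgroup.index = M.det.natAbs := by
  by_cases hdet : M.det = 0
  · rw [hdet, Int.natAbs_zero]
    by_contra hindex
    set k := (LinearMap.range M.mulVecLin).toAddSubgroup.index
    have exists_preimage (i : n) : ∃ w, M *ᵥ w = Pi.single i (k : ℤ) := by
      have := (LinearMap.range M.mulVecLin).toAddSubgroup.nsmul_index_mem (Pi.single i 1)
      rwa [← Pi.single_smul, nsmul_one] at this
    obtain ⟨v, hv, hvM⟩ := exists_vecMul_eq_zero_iff.2 hdet
    refine hv (funext fun i ↦ ?_)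
    obtain ⟨w, hw⟩ := exists_preimage i
    have := dotProduct_mulVec v M w
    simpa [hw, hvM, hindex] using this
  · have hinj : Function.Injective M.mulVecLin := by
      refine (injective_iff_map_eq_zero _).2 fun v hv ↦ ?_
      exact eq_zero_of_mulVec_eq_zero hdet hv
    have key := Submodule.natAbs_det_equiv (LinearMap.range M.mulVecLin)
      (LinearEquiv.ofInjective M.mulVecLin hinj)
    rw [← LinearMap.det_toLin']
    exact key.symm

theorem det_transpose_mul_self_eq_index_sq {m n : Type*} [Fintype m] [Fintype n] [DecidableEq n]
    (Q : Matrix m n ℤ) (h : Fintype.card m = Fintype.card n) :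
    (Qᵀ * Q).det = ((LinearMap.range Q.mulVecLin).toAddSubgroup.index : ℤ) ^ 2 := by
  let e : n ≃ m := Fintype.equivOfCardEq h.symm
  let M : Matrix n n ℤ := Q.submatrix e id
  have gram_eq : Qᵀ * Q = Mᵀ * M := by
    rw [transpose_submatrix, submatrix_mul_equiv, submatrix_id_id]
  have map_range : (LinearMap.range Q.mulVecLin).map (LinearEquiv.funCongrLeft ℤ ℤ e).toLinearMap =
      LinearMap.range M.mulVecLin := by
    rw [← LinearMap.range_comp]; rfl
  have index_eq : (LinearMap.range Q.mulVecLin).toAddSubgroup.index =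
      (LinearMap.range M.mulVecLin).toAddSubgroup.index := by
    rw [← map_range]
    exact (AddSubgroup.index_map_equiv _ (LinearEquiv.funCongrLeft ℤ ℤ e).toAddEquiv).symm
  rw [gram_eq, det_mul, det_transpose, index_eq, index_range_mulVecLin, Int.natAbs_sq, sq]

theorem index_map_eq_relIndex_mul_relIndex {G H₁ H₂ : Type*} [AddCommGroup G] [AddCommGroup H₁]
    [AddCommGroup H₂] {π : G →+ H₁} (hπ : Function.Surjective π) {f : G →+ H₂}
    {I : AddSubgroup G} (hI : I ≤ f.ker) :
    (I.map π).index =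
      (π.ker.map f).relIndex f.range * (I ⊔ π.ker ⊓ f.ker).relIndex f.ker := by
  have index_map : (I.map π).index = (I ⊔ π.ker).index := by
    rw [AddSubgroup.index_map, AddMonoidHom.range_eq_top_of_surjective _ hπ, AddSubgroup.index_top,
      mul_one]
  have sup_sup_ker : (I ⊔ π.ker) ⊔ f.ker = π.ker ⊔ f.ker := by
    rw [sup_comm I, sup_assoc, sup_eq_right.2 hI]
  have relIndex_range : (π.ker.map f).relIndex f.range = (π.ker ⊔ f.ker).index := by
    rw [f.range_eq_map, AddSubgroup.relIndex_map_map, top_sup_eq, AddSubgroup.relIndex_top_right]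
  have relIndex_sup : (I ⊔ π.ker).relIndex (π.ker ⊔ f.ker) =
      (I ⊔ π.ker ⊓ f.ker).relIndex f.ker := by
    rw [← sup_sup_ker, AddSubgroup.relIndex_sup_left, ← AddSubgroup.inf_relIndex_right,
      sup_inf_assoc_of_le _ hI]
  rw [index_map, relIndex_range, ← relIndex_sup, mul_comm]
  exact (AddSubgroup.relIndex_mul_index (sup_sup_ker ▸ le_sup_left)).symm

variable {M : Type*} [AddCommGroup M] {N K : Submodule ℤ M}

/-- The index `[K : N]` of a subgroup `N ≤ K` of `M`, both given as `ℤ`-submodules. As for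
`AddSubgroup.relIndex`, the value is `0` if the index is infinite. -/
noncomputable def latticeIndex (K N : Submodule ℤ M) : ℕ :=
  N.toAddSubgroup.relIndex K.toAddSubgroup

theorem latticeIndex_ne_zero_iff_finrank_eq [Module.Free ℤ M] [Module.Finite ℤ M] (h : N ≤ K) :
    latticeIndex K N ≠ 0 ↔ finrank ℤ N = finrank ℤ K := by
  rw [← (Submodule.comapSubtypeEquivOfLe h).finrank_eq, ← Submodule.finiteQuotient_iff]
  exact AddSubgroup.index_ne_zero_iff_finite

theorem latticeIndex_mul_latticeIndex {L : Submodule ℤ M} (hNK : N ≤ K) (hKL : K ≤ L) :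
    latticeIndex K N * latticeIndex L K = latticeIndex L N :=
  AddSubgroup.relIndex_mul_relIndex _ _ _ hNK hKL

/-- The order of the torsion subgroup of `K / N`, for subgroups `N ≤ K` of `M`. As for `Nat.card`,
the value is `0` if that subgroup is infinite. -/
noncomputable def torsionOrder (K N : Submodule ℤ M) : ℕ :=
  Nat.card (Submodule.torsion ℤ (K ⧸ Submodule.comap K.subtype N))

theorem torsionOrder_eq_latticeIndex (h : latticeIndex K N ≠ 0) :
    torsionOrder K N = latticeIndex K N := by
  have torsion_eq_top : Submodule.torsion ℤ (K ⧸ Submodule.comap K.subtype N) = ⊤ := by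
    have : Finite (K ⧸ Submodule.comap K.subtype N) := Nat.finite_of_card_ne_zero h
    exact (Submodule.isTorsion'_iff_torsion'_eq_top _).1
      (isAddTorsion_iff_isTorsion_int.1 isAddTorsion_of_finite)
  rw [torsionOrder, torsion_eq_top, Nat.card_congr Submodule.topEquiv.toEquiv]
  rfl

end Index

section Forest

variable {l m n p : Type*}

/-- The subgroup of `m → ℤ` generated by the columns of `A` in `T`, i.e. the image of the boundary
map restricted to the chains supported on `T`. -/
def colSpan (A : Matrix m n ℤ) (T : Finset n) : Submodule ℤ (m → ℤ) :=
  Submodule.span ℤ ((fun τ => Aᵀ τ) '' ↑T)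

theorem colSpan_le_range [Fintype n] (A : Matrix m n ℤ) (T : Finset n) :
    colSpan A T ≤ LinearMap.range A.mulVecLin := by
  rw [range_mulVecLin]
  exact Submodule.span_mono (Set.image_subset_range _ _)

theorem colSpan_le_ker [Fintype m] {C : Matrix l m ℤ} {A : Matrix m n ℤ}
    (hCA : C * A = 0) (T : Finset n) : colSpan A T ≤ LinearMap.ker C.mulVecLin := by
  rw [colSpan, Submodule.span_le]
  rintro _ ⟨τ, _, rfl⟩
  exact congr_fun (congr_arg transpose hCA) τ

theorem map_mulVecLin_ker_funLeft [Fintype n] [DecidableEq n] (A : Matrix m n ℤ) (S : Finset n) :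
    (LinearMap.ker (LinearMap.funLeft ℤ ℤ (Subtype.val : S → n))).map A.mulVecLin =
      colSpan A Sᶜ := by
  refine le_antisymm ?_ (Submodule.span_le.2 ?_)
  · rintro _ ⟨x, hx, rfl⟩
    rw [mulVecLin_apply, mulVec_eq_sum]
    simp only [op_smul_eq_smul]
    refine sum_mem fun i _ ↦ ?_
    by_cases hi : i ∈ S
    · have : x i = 0 := congr_fun hx ⟨i, hi⟩
      simp [this]
    · have : i ∈ (↑Sᶜ : Set n) := by simpa using hi
      exact Submodule.smul_mem _ _ (Submodule.subset_span ⟨i, this, rfl⟩)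
  · rintro _ ⟨i, hi, rfl⟩
    refine ⟨Pi.single i 1, funext fun j ↦ Pi.single_eq_of_ne ?_ _, mulVec_single_one A i⟩
    rintro rfl
    simp at hi

theorem map_funLeft_colSpan (B : Matrix n p ℤ) (S : Finset n) (T : Finset p) :
    (colSpan B T).map (LinearMap.funLeft ℤ ℤ (Subtype.val : S → n)) =
      LinearMap.range
        (B.submatrix (Subtype.val : S → n) (Subtype.val : T → p)).mulVecLin := by
  rw [colSpan, Submodule.map_span, range_mulVecLin, Set.image_image, Set.image_eq_range]
  rfl

theorem finrank_ker_funLeft [Fintype n] [DecidableEq n] (S : Finset n) :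
    finrank ℤ (LinearMap.ker (LinearMap.funLeft ℤ ℤ (Subtype.val : S → n))) = Sᶜ.card := by
  have rank_nullity := finrank_range_add_finrank_ker (LinearMap.funLeft ℤ ℤ (Subtype.val : S → n))
  rw [LinearMap.range_eq_top.2 (LinearMap.funLeft_surjective_of_injective ℤ ℤ _
    Subtype.val_injective), finrank_top, finrank_fintype_fun_eq_card, finrank_fintype_fun_eq_card,
    Fintype.card_coe] at rank_nullity
  rw [Finset.card_compl]
  omega

theorem sqMinor_eq_latticeIndex_mul_latticeIndex_sq [Finite m] [Fintype n] [DecidableEq n]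
    [DecidableEq p] {A : Matrix m n ℤ} {B : Matrix n p ℤ} {S : Finset n} {T : Finset p}
    (hT : colSpan B T ≤ LinearMap.ker A.mulVecLin) (hcard : S.card = T.card)
    (hS : Sᶜ.card = A.rank) :
    sqMinor B S T =
      ((latticeIndex (LinearMap.range A.mulVecLin) (colSpan A Sᶜ) *
        latticeIndex (LinearMap.ker A.mulVecLin) (colSpan B T) : ℕ) : ℤ) ^ 2 := by
  let π := LinearMap.funLeft ℤ ℤ (Subtype.val : S → n)
  have hπ : Function.Surjective π :=
    LinearMap.funLeft_surjective_of_injective ℤ ℤ _ Subtype.val_injective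
  have index_eq : ((colSpan B T).map π).toAddSubgroup.index =
      latticeIndex (LinearMap.range A.mulVecLin) ((LinearMap.ker π).map A.mulVecLin) *
      latticeIndex (LinearMap.ker A.mulVecLin)
        (colSpan B T ⊔ LinearMap.ker π ⊓ LinearMap.ker A.mulVecLin) := by
    rw [latticeIndex, latticeIndex, Submodule.sup_toAddSubgroup]
    exact index_map_eq_relIndex_mul_relIndex (π := π.toAddMonoidHom) hπ
      (f := A.mulVecLin.toAddMonoidHom) (I := (colSpan B T).toAddSubgroup) hT
  rw [map_funLeft_colSpan, map_mulVecLin_ker_funLeft] at index_eq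
  rw [sqMinor, det_transpose_mul_self_eq_index_sq _ (by simpa using hcard), index_eq]
  by_cases hforest : finrank ℤ (colSpan A Sᶜ) = A.rank
  · have disjoint : Disjoint (LinearMap.ker π) (LinearMap.ker A.mulVecLin) := by
      apply disjoint_ker_of_finrank_map_eq
      rw [map_mulVecLin_ker_funLeft, finrank_ker_funLeft, hforest, hS]
    rw [disjoint.eq_bot, sup_bot_eq]
  · have : latticeIndex (LinearMap.range A.mulVecLin) (colSpan A Sᶜ) = 0 := by
      rwa [← not_ne_iff, latticeIndex_ne_zero_iff_finrank_eq (colSpan_le_range A _)]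
    simp only [this, zero_mul]

/-- The maximal spanning forests of a cell complex with boundary matrix `A`, as sets of columns. -/
def IsMaximalForest [Fintype n] (A : Matrix m n ℤ) (T : Finset n) : Prop :=
  LinearIndependent ℚ (fun τ : T => fun σ => ((A σ τ.1 : ℤ) : ℚ)) ∧
    T.card = (A.map (Int.cast : ℤ → ℚ)).rank

theorem isMaximalForest_iff [Finite m] [Fintype n] {A : Matrix m n ℤ} {T : Finset n} :
    IsMaximalForest A T ↔ T.card = A.rank ∧ finrank ℤ (colSpan A T) = A.rank := by
  have linearIndependent_iff : LinearIndependent ℚ (fun τ : T => fun σ => ((A σ τ.1 : ℤ) : ℚ)) ↔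
      T.card = finrank ℤ (colSpan A T) := by
    rw [colSpan, Set.image_eq_range, ← Fintype.card_coe]
    exact (linearIndependent_algebraMap_comp_iff (R := ℤ) (S := ℚ) (v := fun τ : T ↦ Aᵀ τ)).trans
      linearIndependent_iff_card_eq_finrank_span
  rw [IsMaximalForest, linearIndependent_iff, rank_map_intCast]
  omega

/-- The torsion-weighted forest count `τ_k` of a cell complex with `∂_{k-1} = C` and `∂_k = A`. -/
noncomputable def forestCount [Fintype m] [Fintype n] (C : Matrix l m ℤ) (A : Matrix m n ℤ) : ℕ :=
  ∑ᶠ T ∈ {T | IsMaximalForest A T}, torsionOrder (LinearMap.ker C.mulVecLin) (colSpan A T) ^ 2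

theorem forestCount_eq_sum_latticeIndex_sq [Fintype m] [Fintype n] {C : Matrix l m ℤ}
    {A : Matrix m n ℤ} (hCA : C * A = 0) (hrank : C.rank + A.rank = Fintype.card m) :
    forestCount C A = ∑ T ∈ Finset.univ.powersetCard A.rank,
      latticeIndex (LinearMap.ker C.mulVecLin) (colSpan A T) ^ 2 := by
  have isMaximalForest_iff_latticeIndex_ne_zero (T : Finset n) : IsMaximalForest A T ↔
      T.card = A.rank ∧ latticeIndex (LinearMap.ker C.mulVecLin) (colSpan A T) ≠ 0 := by
    rw [isMaximalForest_iff, latticeIndex_ne_zero_iff_finrank_eq (colSpan_le_ker hCA T)]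
    have rank_nullity := rank_add_finrank_ker_mulVecLin C
    omega
  have torsionOrder_eq : ∀ T ∈ {T | IsMaximalForest A T},
      torsionOrder (LinearMap.ker C.mulVecLin) (colSpan A T) ^ 2 =
        latticeIndex (LinearMap.ker C.mulVecLin) (colSpan A T) ^ 2 := fun T hT ↦ by
    rw [torsionOrder_eq_latticeIndex ((isMaximalForest_iff_latticeIndex_ne_zero T).1 hT).2]
  rw [forestCount, finsum_mem_congr rfl torsionOrder_eq]
  refine finsum_mem_eq_sum_of_inter_support_eq _ (Set.ext fun T ↦ ?_)
  simp [isMaximalForest_iff_latticeIndex_ne_zero]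

theorem forestCount_eq_torsionOrder_sq_mul_sum [Fintype m] [Fintype n] {C : Matrix l m ℤ}
    {A : Matrix m n ℤ} (hCA : C * A = 0) (hrank : C.rank + A.rank = Fintype.card m) :
    forestCount C A =
      torsionOrder (LinearMap.ker C.mulVecLin) (LinearMap.range A.mulVecLin) ^ 2 *
        ∑ T ∈ Finset.univ.powersetCard A.rank,
          latticeIndex (LinearMap.range A.mulVecLin) (colSpan A T) ^ 2 := by
  have range_le_ker : LinearMap.range A.mulVecLin ≤ LinearMap.ker C.mulVecLin := by
    rw [LinearMap.range_le_ker_iff, ← mulVecLin_mul, hCA, mulVecLin_zero]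
  have finrank_eq : A.rank = finrank ℤ (LinearMap.ker C.mulVecLin) := by
    have rank_nullity := rank_add_finrank_ker_mulVecLin C
    omega
  rw [torsionOrder_eq_latticeIndex
      ((latticeIndex_ne_zero_iff_finrank_eq range_le_ker).2 finrank_eq),
    forestCount_eq_sum_latticeIndex_sq hCA hrank, Finset.mul_sum]
  refine Finset.sum_congr rfl fun T _ ↦ ?_
  rw [← latticeIndex_mul_latticeIndex (colSpan_le_range A T) range_le_ker, mul_pow, mul_comm]

theorem sum_sqMinor_eq_sum_latticeIndex_sq_mul_forestCount [Finite m] [Fintype n]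
    [Fintype p] [DecidableEq p] {A : Matrix m n ℤ} {B : Matrix n p ℤ} (hAB : A * B = 0)
    (hrank : A.rank + B.rank = Fintype.card n) :
    ∑ S ∈ Finset.univ.powersetCard B.rank, ∑ T ∈ Finset.univ.powersetCard B.rank, sqMinor B S T =
      (((∑ S ∈ Finset.univ.powersetCard A.rank,
        latticeIndex (LinearMap.range A.mulVecLin) (colSpan A S) ^ 2) *
          forestCount A B : ℕ) : ℤ) := by
  classical
  rw [forestCount_eq_sum_latticeIndex_sq hAB hrank, Finset.sum_mul_sum, Nat.cast_sum]
  have card_compl_eq (S : Finset n) (hS : S.card = B.rank) : Sᶜ.card = A.rank := by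
    rw [Finset.card_compl]; omega
  refine Finset.sum_nbij' compl compl ?_ ?_ (by simp) (by simp) fun S hS ↦ ?_
  · simpa using card_compl_eq
  · simp only [Finset.mem_powersetCard_univ, Finset.card_compl]
    omega
  rw [Nat.cast_sum]
  refine Finset.sum_congr rfl fun T hT ↦ ?_
  rw [Finset.mem_powersetCard_univ] at hS hT
  rw [sqMinor_eq_latticeIndex_mul_latticeIndex_sq (colSpan_le_ker hAB T) (hS.trans hT.symm)
    (card_compl_eq S hS), ← mul_pow, Nat.cast_pow]

end Forest

end MatrixForest

open MatrixForest in
theorem cellular_matrix_forest_eigenvalues_general {K l m n p : Type*} [Field K] [CharZero K]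
    [Finite l] [Fintype m] [Fintype n] [DecidableEq n] [Fintype p]
    {C : Matrix l m ℤ} {A : Matrix m n ℤ} {B : Matrix n p ℤ}
    (hCA : LinearMap.ker (C.map (Int.cast : ℤ → K)).mulVecLin =
      LinearMap.range (A.map (Int.cast : ℤ → K)).mulVecLin)
    (hAB : LinearMap.ker (A.map (Int.cast : ℤ → K)).mulVecLin =
      LinearMap.range (B.map (Int.cast : ℤ → K)).mulVecLin) :
    ((forestCount C A * forestCount A B : ℕ) : ℂ) =
      ((torsionOrder (LinearMap.ker C.mulVecLin) (LinearMap.range A.mulVecLin) ^ 2 : ℕ) : ℂ) *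
        pseudoDet (B * Bᵀ) := by
  classical
  rw [pseudoDet_mul_transpose, sum_sqMinor_eq_sum_latticeIndex_sq_mul_forestCount
      (mul_eq_zero_of_ker_eq_range hAB) (rank_add_rank_eq_card_of_ker_eq_range hAB),
    forestCount_eq_torsionOrder_sq_mul_sum
      (mul_eq_zero_of_ker_eq_range hCA) (rank_add_rank_eq_card_of_ker_eq_range hCA)]
  push_cast
  ring

/-- **The eigenvalue form of the cellular matrix-forest theorem.**
Here `d = e + 2 ≥ 2`; `a (k+1)` is the number of `k`-cells (and `a 0 = 1`), `bd k` is the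
`k`-th boundary matrix (`bd 0` the all-ones row), and `H_{d-1}(X;ℝ) = H_{d-2}(X;ℝ) = 0`.
Then `τ_{d-1}(X) · τ_d(X) = t(ker ∂_{d-2}/im ∂_{d-1})² · λ(∂_d ∂_dᵀ)`. -/
theorem cellular_matrix_forest_eigenvalues (e : ℕ) (a : ℕ → ℕ) (ha : a 0 = 1)
    (bd : (k : ℕ) → Matrix (Fin (a k)) (Fin (a (k + 1))) ℤ)
    (h0 : ∀ i j, bd 0 i j = 1)
    (hchain : ∀ k ≤ e + 1, bd k * bd (k + 1) = 0)
    (hd1 : LinearMap.ker ((bd (e + 1)).map (Int.cast : ℤ → ℝ)).mulVecLin =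
      LinearMap.range ((bd (e + 2)).map (Int.cast : ℤ → ℝ)).mulVecLin)
    (hd2 : LinearMap.ker ((bd e).map (Int.cast : ℤ → ℝ)).mulVecLin =
      LinearMap.range ((bd (e + 1)).map (Int.cast : ℤ → ℝ)).mulVecLin) :
    -- τ_{d-1}(X)
    letI τd1 : ℕ := ∑ᶠ T ∈ {T : Finset (Fin (a (e + 2))) |
        LinearIndependent ℚ (fun τ : T => fun σ => ((bd (e + 1) σ τ.1 : ℤ) : ℚ)) ∧
          T.card = ((bd (e + 1)).map (Int.cast : ℤ → ℚ)).rank},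
      (Nat.card (Submodule.torsion ℤ
        (LinearMap.ker (bd e).mulVecLin ⧸
          Submodule.comap (LinearMap.ker (bd e).mulVecLin).subtype
            (Submodule.span ℤ ((fun τ => (bd (e + 1))ᵀ τ) '' ↑T))))) ^ 2
    -- τ_d(X)
    letI τd : ℕ := ∑ᶠ T ∈ {T : Finset (Fin (a (e + 3))) |
        LinearIndependent ℚ (fun τ : T => fun σ => ((bd (e + 2) σ τ.1 : ℤ) : ℚ)) ∧
          T.card = ((bd (e + 2)).map (Int.cast : ℤ → ℚ)).rank},
      (Nat.card (Submodule.torsion ℤ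
        (LinearMap.ker (bd (e + 1)).mulVecLin ⧸
          Submodule.comap (LinearMap.ker (bd (e + 1)).mulVecLin).subtype
            (Submodule.span ℤ ((fun τ => (bd (e + 2))ᵀ τ) '' ↑T))))) ^ 2
    -- t(ker ∂_{d-2} / im ∂_{d-1})
    letI tX : ℕ :=
      Nat.card (Submodule.torsion ℤ
        (LinearMap.ker (bd e).mulVecLin ⧸
          Submodule.comap (LinearMap.ker (bd e).mulVecLin).subtype
            (LinearMap.range (bd (e + 1)).mulVecLin)))
    ((τd1 * τd : ℕ) : ℂ) = ((tX ^ 2 : ℕ) : ℂ) * pseudoDet (bd (e + 2) * (bd (e + 2))ᵀ) :=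
  cellular_matrix_forest_eigenvalues_general hd2 hd1
end

section
/- Let G be a connected finite simple graph on vertex set V, |V| = n, with Laplacian matrix L(G), regarded as a ℤ-linear map ℤ^V → ℤ^V. Define the critical group K(G) to be the torsion subgroup of the quotient group ℤ^V / im_ℤ(L(G)). Then for every vertex v: (1) K(G) is isomorphic as an abelian group to ℤ^{V∖{v}} / im_ℤ(L̃), where L̃ is the reduced Laplacian obtained from L(G) by deleting the row and column indexed by v; and (2) the cardinality of K(G) equals the number of spanning trees of G. -/
open Matrix

/-- `T` is (the edge set of) a spanning tree of `G`: `T ⊆ E(G)` and the graph `(V, T)`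
is connected and acyclic. -/
def IsSpanningTree {V : Type*} (G : SimpleGraph V) (T : Set (Sym2 V)) : Prop :=
  T ⊆ G.edgeSet ∧ (SimpleGraph.fromEdgeSet T).Connected ∧ (SimpleGraph.fromEdgeSet T).IsAcyclic

/-- The number of spanning trees of `G`. -/
noncomputable def treeCount {V : Type*} (G : SimpleGraph V) : ℕ :=
  Nat.card {T : Set (Sym2 V) // IsSpanningTree G T}

/-- The critical group of `G`: the torsion subgroup of `ℤ^V / im_ℤ L(G)`. -/
noncomputable def criticalGroup {V : Type*} [Fintype V] [DecidableEq V]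
    (G : SimpleGraph V) [DecidableRel G.Adj] : AddSubgroup
      ((V → ℤ) ⧸ (LinearMap.range (SimpleGraph.lapMatrix ℤ G).mulVecLin).toAddSubgroup) :=
  AddCommGroup.torsion _

/-!
Expand the determinant of the reduced Laplacian `L̃` by multilinearity over all choices of one edge
out of each vertex other than `v`. A choice whose edges lead every vertex to `v` contributes `1`,
its matrix being unitriangular for the ordering by depth; any other choice contributes `0`, since
the indicator of the vertices that never reach `v` lies in the kernel. The former choices are the
spanning trees oriented towards `v`, so `det L̃ = τ(G) ≠ 0`.

As the columns of `L(G)` sum to zero and `det L̃ ≠ 0`, the torsion classes of `ℤ^V / im L(G)` are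
those of the vectors with coordinate sum zero. As also the rows of `L(G)` sum to zero, restriction
to `V∖{v}` identifies them with the cokernel of `L̃`, which has order `|det L̃|`.
-/

namespace CriticalGroup

section PrincipalSubmatrix

variable {V R : Type*}

/-- The principal submatrix of `A` on the indices satisfying `P`; for `P = (· ≠ v)` and `A` a
Laplacian, this is the reduced Laplacian at `v`. -/
abbrev principalSubmatrix (P : V → Prop) (A : Matrix V V R) : Matrix {u // P u} {u // P u} R :=
  A.submatrix (Subtype.val : {u // P u} → V) (Subtype.val : {u // P u} → V)

theorem submatrix_val_mulVec_comp_val [Fintype V] {P : V → Prop} [DecidablePred P]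
    [NonUnitalNonAssocSemiring R] {l m : Type*} (A : Matrix m V R) (f : l → m) {y : V → R}
    (hy : ∀ w, ¬ P w → y w = 0) :
    A.submatrix f (Subtype.val : {u // P u} → V) *ᵥ (y ∘ Subtype.val) = (A *ᵥ y) ∘ f := by
  ext i
  simp only [mulVec, dotProduct, submatrix_apply, Function.comp_apply]
  rw [← Fintype.sum_subtype_add_sum_subtype P,
    Finset.sum_eq_zero fun (w : {w // ¬ P w}) _ ↦ by rw [hy w w.2, mul_zero], add_zero]

end PrincipalSubmatrix

section RootedForest

variable {V : Type*} {P : V → Prop}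

/-- `IsParent p a b` says that `a` is the parent of `b` under the parent function `p`. The roots,
which have no parent, are the vertices that do not satisfy `P`. -/
def IsParent (p : {u // P u} → V) (a b : V) : Prop :=
  ∃ hb : P b, p ⟨b, hb⟩ = a

/-- The parent function `p` describes a rooted forest. Well-foundedness encodes that repeatedly
passing to the parent ends, necessarily at a root. -/
def IsRootedForest (p : {u // P u} → V) : Prop :=
  WellFounded (IsParent p)

theorem isParent_apply (p : {u // P u} → V) (u : {u // P u}) : IsParent p (p u) u :=
  ⟨u.2, rfl⟩

theorem acc_isParent_of_not {p : {u // P u} → V} {w : V} (hw : ¬ P w) : Acc (IsParent p) w :=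
  ⟨w, fun _ ⟨h, _⟩ ↦ absurd h hw⟩

theorem acc_isParent_apply_iff (p : {u // P u} → V) (u : {u // P u}) :
    Acc (IsParent p) (p u) ↔ Acc (IsParent p) (u : V) := by
  refine ⟨fun h ↦ ⟨_, ?_⟩, fun h ↦ h.inv (isParent_apply p u)⟩
  rintro _ ⟨_, rfl⟩
  exact h

theorem IsRootedForest.apply_ne {p : {u // P u} → V} (hp : IsRootedForest p) (u : {u // P u}) :
    p u ≠ u := fun h ↦
  hp.irrefl.irrefl (u : V) (by simpa only [h] using isParent_apply p u)

theorem isRootedForest_of_lt {α : Type*} [Preorder α] [WellFoundedLT α] {p : {u // P u} → V}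
    (d : V → α) (hd : ∀ u, d (p u) < d u) : IsRootedForest p :=
  Subrelation.wf (r := InvImage (· < ·) d) (by rintro _ _ ⟨h, rfl⟩; exact hd ⟨_, h⟩)
    (InvImage.wf d wellFounded_lt)

end RootedForest

section MatrixForest

variable {V R : Type*} [DecidableEq V] [CommRing R] {P : V → Prop}

/-- The matrix with rows `e_u - e_{p u}`, restricted to the columns of non-root vertices: the
reduced Laplacian of the directed graph with the single edge `u → p u` out of each non-root `u`. -/
def parentMatrix (R : Type*) [CommRing R] (p : {u // P u} → V) :
    Matrix {u // P u} {u // P u} R :=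
  (1 : Matrix V V R).submatrix Subtype.val Subtype.val -
    (1 : Matrix V V R).submatrix p Subtype.val

variable [Fintype V]

/-- The Laplacian of the directed graph on `V` whose edge `u → z` has weight `A u z`. -/
def weightedLaplacian (A : Matrix V V R) : Matrix V V R :=
  diagonal (A *ᵥ 1) - A

theorem principalSubmatrix_weightedLaplacian_row (A : Matrix V V R) (u : {u // P u}) :
    principalSubmatrix P (weightedLaplacian A) u =
      ∑ z, A u z • fun x : {u // P u} ↦ (1 : Matrix V V R) u x - (1 : Matrix V V R) z x := by
  ext x
  simp [weightedLaplacian, diagonal_apply, one_apply, mulVec, dotProduct, Finset.sum_apply,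
    mul_sub, Finset.sum_sub_distrib]

variable [DecidablePred P]

theorem parentMatrix_mulVec_comp_val (p : {u // P u} → V) {y : V → R}
    (hy : ∀ w, ¬ P w → y w = 0) :
    parentMatrix R p *ᵥ (y ∘ Subtype.val) = fun u : {u // P u} ↦ y u - y (p u) := by
  rw [parentMatrix, sub_mulVec, submatrix_val_mulVec_comp_val _ _ hy,
    submatrix_val_mulVec_comp_val _ _ hy, one_mulVec]
  rfl

theorem det_parentMatrix_of_isRootedForest {p : {u // P u} → V} (hp : IsRootedForest p) :
    (parentMatrix R p).det = 1 := by
  have : IsWellFounded V (IsParent p) := ⟨hp⟩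
  let d : V → Ordinal := IsWellFounded.rank (IsParent p)
  have hd (u : {u // P u}) : d (p u) < d u := IsWellFounded.rank_lt_of_rel (isParent_apply p u)
  have apply_of_ne {u x : {u // P u}} (h : p u ≠ x) :
      parentMatrix R p u x = (1 : Matrix {u // P u} {u // P u} R) u x := by
    simp [parentMatrix, h, one_apply, Subtype.ext_iff]
  let depth : {u // P u} → Ordinalᵒᵈ := fun u ↦ OrderDual.toDual (d u)
  have triangular : (parentMatrix R p).BlockTriangular depth := by
    intro u x (hux : d u < d x)
    have hne : u ≠ x := fun h ↦ hux.ne (congrArg (fun z : {u // P u} ↦ d z) h)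
    rw [apply_of_ne fun h ↦ (hd u).not_gt (h.symm ▸ hux), one_apply_ne hne]
  rw [triangular.det]
  refine Finset.prod_eq_one fun a _ ↦ ?_
  have block_eq_one : (parentMatrix R p).toSquareBlock depth a = 1 := by
    ext u x
    have hux : d u = d x := OrderDual.toDual.injective (u.2.trans x.2.symm)
    rw [toSquareBlock_def, of_apply, apply_of_ne fun h ↦ (hd u).ne (h.symm ▸ hux.symm)]
    simp only [one_apply, Subtype.ext_iff]
  rw [block_eq_one, det_one]

theorem det_parentMatrix_of_not_isRootedForest {p : {u // P u} → V} (hp : ¬ IsRootedForest p) :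
    (parentMatrix R p).det = 0 := by
  classical
  obtain ⟨w, hw⟩ : ∃ w, ¬ Acc (IsParent p) w := not_forall.1 fun h ↦ hp ⟨h⟩
  have hPw : P w := of_not_not (hw ∘ acc_isParent_of_not)
  let y : V → R := fun a ↦ if Acc (IsParent p) a then 0 else 1
  have ker : parentMatrix R p *ᵥ (y ∘ Subtype.val) = 0 := by
    rw [parentMatrix_mulVec_comp_val (R := R) p fun a ha ↦ if_pos (acc_isParent_of_not ha)]
    ext u
    simp only [acc_isParent_apply_iff, sub_self, Pi.zero_apply]
  refine det_eq_zero_of_mulVec_eq_zero_of_mem_nonZeroDivisors (i := ⟨w, hPw⟩) ker ?_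
  simp [y, hw]

open Classical in
theorem det_principalSubmatrix_weightedLaplacian (A : Matrix V V R) :
    (principalSubmatrix P (weightedLaplacian A)).det =
      ∑ p : {u // P u} → V with IsRootedForest p, ∏ u : {u // P u}, A u (p u) := by
  calc (principalSubmatrix P (weightedLaplacian A)).det
      = ∑ p : {u // P u} → V,
          det (of fun (u x : {u // P u}) ↦ A u (p u) * parentMatrix R p u x) := by
        rw [show principalSubmatrix P (weightedLaplacian A) = of _ from
          funext (principalSubmatrix_weightedLaplacian_row A)]
        exact detRowAlternating.toMultilinearMap.map_sum _
    _ = ∑ p : {u // P u} → V, (∏ u : {u // P u}, A u (p u)) * (parentMatrix R p).det := by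
        simp only [det_mul_column]
    _ = ∑ p : {u // P u} → V with IsRootedForest p, ∏ u : {u // P u}, A u (p u) := by
        rw [Finset.sum_filter]
        refine Finset.sum_congr rfl fun p _ ↦ ?_
        split_ifs with hp
        · rw [det_parentMatrix_of_isRootedForest hp, mul_one]
        · rw [det_parentMatrix_of_not_isRootedForest hp, mul_zero]

theorem lapMatrix_eq_weightedLaplacian (G : SimpleGraph V) [DecidableRel G.Adj] :
    G.lapMatrix R = weightedLaplacian (G.adjMatrix R) := by
  have degree_eq : (fun u ↦ (G.degree u : R)) = G.adjMatrix R *ᵥ 1 := by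
    ext u
    simp [SimpleGraph.adjMatrix_mulVec_apply]
  rw [SimpleGraph.lapMatrix, SimpleGraph.degMatrix, degree_eq, weightedLaplacian]

theorem det_principalSubmatrix_lapMatrix (G : SimpleGraph V) [DecidableRel G.Adj] :
    (principalSubmatrix P (G.lapMatrix R)).det =
      Nat.card {p : {u // P u} → V // IsRootedForest p ∧ ∀ u : {u // P u}, G.Adj u (p u)} := by
  classical
  rw [lapMatrix_eq_weightedLaplacian, det_principalSubmatrix_weightedLaplacian]
  simp only [SimpleGraph.adjMatrix_apply, Fintype.prod_boole, Finset.sum_boole,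
    Finset.filter_filter, Nat.card_eq_fintype_card, Fintype.card_subtype]

end MatrixForest

section SpanningTree

open SimpleGraph

variable {V : Type*} {P : V → Prop}

/-- The undirected graph underlying a parent function. -/
def parentGraph (p : {u // P u} → V) : SimpleGraph V :=
  SimpleGraph.fromRel (IsParent p)

theorem parentGraph_le {G : SimpleGraph V} {p : {u // P u} → V}
    (hp : ∀ u : {u // P u}, G.Adj u (p u)) :
    parentGraph p ≤ G := by
  rintro a b ⟨-, ⟨h, rfl⟩ | ⟨h, rfl⟩⟩
  · exact (hp ⟨b, h⟩).symm
  · exact hp ⟨a, h⟩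

theorem edgeSet_parentGraph_subset (p : {u // P u} → V) :
    (parentGraph p).edgeSet ⊆ Set.range fun u : {u // P u} ↦ s((u : V), p u) := by
  intro e
  induction e with | _ a b
  rw [mem_edgeSet]
  rintro ⟨-, ⟨h, rfl⟩ | ⟨h, rfl⟩⟩
  · exact ⟨⟨b, h⟩, Sym2.eq_swap⟩
  · exact ⟨⟨a, h⟩, rfl⟩

namespace IsRootedForest

theorem parentGraph_adj {p : {u // P u} → V} (hp : IsRootedForest p) (u : {u // P u}) :
    (parentGraph p).Adj u (p u) :=
  ⟨(hp.apply_ne u).symm, .inr (isParent_apply p u)⟩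

-- If `p` and `q` first differ at `u`, the edge from `u` to `q u` must be the `p`-edge out of
-- `q u`, so `p (q u) = u`; as `p` and `q` agree at `q u`, this makes `u → q u → u` a `q`-cycle.
theorem eq_of_parentGraph_eq {p q : {u // P u} → V} (hq : IsRootedForest q)
    (h : parentGraph p = parentGraph q) : p = q := by
  suffices ∀ w (hw : P w), p ⟨w, hw⟩ = q ⟨w, hw⟩ from funext fun u ↦ this u u.2
  intro w
  induction w using hq.induction with
  | _ w ih =>
    intro hw
    have adj : (parentGraph p).Adj w (q ⟨w, hw⟩) := h ▸ hq.parentGraph_adj ⟨w, hw⟩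
    obtain ⟨-, ⟨hqw, hpq⟩ | ⟨_, hpw⟩⟩ := adj
    · have hqq : q ⟨q ⟨w, hw⟩, hqw⟩ = w := (ih _ (isParent_apply q _) hqw).symm.trans hpq
      exact absurd (isParent_apply q ⟨w, hw⟩) (hq.asymmetric _ _ ⟨hqw, hqq⟩)
    · exact hpw

variable {v : V} {p : {u // u ≠ v} → V}

theorem parentGraph_connected (hp : IsRootedForest p) : (parentGraph p).Connected := by
  suffices ∀ w, (parentGraph p).Reachable w v from
    connected_iff_exists_forall_reachable _ |>.2 ⟨v, fun w ↦ (this w).symm⟩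
  intro w
  induction w using hp.induction with
  | _ w ih =>
    obtain rfl | hw := eq_or_ne w v
    · rfl
    · exact (hp.parentGraph_adj ⟨w, hw⟩).reachable.trans (ih _ (isParent_apply p ⟨w, hw⟩))

theorem parentGraph_isTree [Finite V] (hp : IsRootedForest p) : (parentGraph p).IsTree := by
  have connected := hp.parentGraph_connected
  refine isTree_iff_connected_and_card.2
    ⟨connected, le_antisymm ?_ connected.card_vert_le_card_edgeSet_add_one⟩
  calc Nat.card (parentGraph p).edgeSet + 1
      ≤ Nat.card (Set.range fun u : {u // u ≠ v} ↦ s((u : V), p u)) + 1 := by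
        gcongr
        exact Nat.card_mono (Set.toFinite _) (edgeSet_parentGraph_subset p)
    _ ≤ Nat.card {u // u ≠ v} + 1 := by
        gcongr
        exact Finite.card_range_le _
    _ = Nat.card V := by
        have : Fintype V := Fintype.ofFinite V
        classical
        simp [Nat.card_eq_fintype_card, Nat.sub_add_cancel (Fintype.card_pos_iff.2 ⟨v⟩)]

end IsRootedForest

theorem exists_adj_dist_lt {T : SimpleGraph V} {u v : V} (huv : T.Reachable u v) (hne : u ≠ v) :
    ∃ w, T.Adj u w ∧ T.dist w v < T.dist u v := by
  obtain ⟨walk, hwalk⟩ := huv.exists_walk_length_eq_dist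
  cases walk with
  | nil => exact absurd rfl hne
  | cons hadj tail =>
    refine ⟨_, hadj, ?_⟩
    rw [← hwalk, Walk.length_cons]
    exact Nat.lt_succ_of_le (dist_le tail)

theorem exists_isRootedForest_parentGraph_eq {T : SimpleGraph V} (hT : T.IsTree) (v : V) :
    ∃ p : {u // u ≠ v} → V, IsRootedForest p ∧ parentGraph p = T := by
  choose p hadj hdist using fun u : {u // u ≠ v} ↦
    exists_adj_dist_lt (hT.connected u v) u.2
  have forest : IsRootedForest p := isRootedForest_of_lt (T.dist · v) hdist
  exact ⟨p, forest, (isTree_iff_minimal_connected.1 hT).eq_of_le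
    forest.parentGraph_connected (parentGraph_le hadj)⟩

theorem card_isRootedForest_eq_card_isTree [Finite V] (G : SimpleGraph V) (v : V) :
    Nat.card {p : {u // u ≠ v} → V // IsRootedForest p ∧ ∀ u : {u // u ≠ v}, G.Adj u (p u)} =
      Nat.card {T : SimpleGraph V // T ≤ G ∧ T.IsTree} := by
  refine Nat.card_congr (Equiv.ofBijective
    (fun p ↦ ⟨parentGraph p.1, parentGraph_le p.2.2, p.2.1.parentGraph_isTree⟩) ⟨?_, ?_⟩)
  · intro p q h
    exact Subtype.ext (q.2.1.eq_of_parentGraph_eq (congrArg Subtype.val h))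
  · rintro ⟨T, hTG, hT⟩
    obtain ⟨p, hp, rfl⟩ := exists_isRootedForest_parentGraph_eq hT v
    exact ⟨⟨p, hp, fun u : {u // u ≠ v} ↦ hTG (hp.parentGraph_adj u)⟩, rfl⟩

theorem edgeSet_fromEdgeSet_of_subset {G : SimpleGraph V} {T : Set (Sym2 V)}
    (hT : T ⊆ G.edgeSet) : (fromEdgeSet T).edgeSet = T := by
  rw [edgeSet_fromEdgeSet, sdiff_eq_left, Set.disjoint_left]
  exact fun e he ↦ G.not_isDiag_of_mem_edgeSet (hT he)

theorem treeCount_eq_card_isTree (G : SimpleGraph V) :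
    treeCount G = Nat.card {T : SimpleGraph V // T ≤ G ∧ T.IsTree} :=
  Nat.card_congr
    { toFun T := ⟨fromEdgeSet T, (fromEdgeSet_le G).2 (Set.sdiff_subset.trans T.2.1),
        T.2.2.1, T.2.2.2⟩
      invFun T := ⟨T.1.edgeSet, edgeSet_mono T.2.1, by
        rw [fromEdgeSet_edgeSet]; exact ⟨T.2.2.connected, T.2.2.isAcyclic⟩⟩
      left_inv T := Subtype.ext (edgeSet_fromEdgeSet_of_subset T.2.1)
      right_inv T := Subtype.ext (fromEdgeSet_edgeSet T.1) }

theorem treeCount_pos [Finite V] {G : SimpleGraph V} (hG : G.Connected) : 0 < treeCount G := by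
  obtain ⟨T, hTG, hT⟩ := hG.exists_isTree_le
  have : Nonempty {T : SimpleGraph V // T ≤ G ∧ T.IsTree} := ⟨⟨T, hTG, hT⟩⟩
  rw [treeCount_eq_card_isTree]
  exact Nat.card_pos

theorem det_reducedLaplacian_eq_treeCount (R : Type*) [CommRing R] [Fintype V] [DecidableEq V]
    (G : SimpleGraph V) [DecidableRel G.Adj] (v : V) :
    (principalSubmatrix (· ≠ v) (G.lapMatrix R)).det = treeCount G := by
  rw [det_principalSubmatrix_lapMatrix, card_isRootedForest_eq_card_isTree,
    treeCount_eq_card_isTree]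

end SpanningTree

section Cokernel

variable {V R : Type*} {v : V}

theorem exists_apply_eq_zero_comp_val_eq [Zero R] (x : {u // u ≠ v} → R) :
    ∃ y : V → R, y v = 0 ∧ y ∘ Subtype.val = x :=
  ⟨Function.extend Subtype.val x 0, Function.extend_apply' _ _ _ (by simp),
    Function.extend_comp Subtype.val_injective _ _⟩

variable [Fintype V]

theorem exists_sum_eq_zero_comp_val_eq [AddCommGroup R] (x : {u // u ≠ v} → R) :
    ∃ y : V → R, ∑ w, y w = 0 ∧ y ∘ Subtype.val = x := by
  classical
  obtain ⟨y, -, rfl⟩ := exists_apply_eq_zero_comp_val_eq x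
  refine ⟨y - Pi.single v (∑ w, y w), by simp, ?_⟩
  ext u
  simp [u.2]

theorem eq_of_sum_eq_of_comp_val_eq [AddCommGroup R] {x y : V → R}
    (hsum : ∑ w, x w = ∑ w, y w)
    (hval : x ∘ (Subtype.val : {u // u ≠ v} → V) = y ∘ Subtype.val) : x = y := by
  classical
  have eq_off {w : V} (hw : w ≠ v) : x w = y w := congrFun hval ⟨w, hw⟩
  ext w
  obtain rfl | hw := eq_or_ne w v
  · rw [Fintype.sum_eq_add_sum_compl w, Fintype.sum_eq_add_sum_compl w,
      Finset.sum_congr rfl fun u hu ↦ eq_off (by simpa using hu)] at hsum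
    exact add_right_cancel hsum
  · exact eq_off hw

theorem sum_mulVec_eq_zero [CommRing R] {L : Matrix V V R} (hcol : 1 ᵥ* L = 0) (y : V → R) :
    ∑ w, (L *ᵥ y) w = 0 := by
  rw [← one_dotProduct, dotProduct_mulVec, hcol, zero_dotProduct]

variable [DecidableEq V]

theorem mulVec_comp_val_eq_principalSubmatrix_mulVec [CommRing R] {L : Matrix V V R}
    (hrow : L *ᵥ 1 = 0) (y : V → R) :
    (L *ᵥ y) ∘ Subtype.val =
      principalSubmatrix (· ≠ v) L *ᵥ ((y - y v • (1 : V → R)) ∘ Subtype.val) := by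
  have shift : L *ᵥ (y - y v • (1 : V → R)) = L *ᵥ y := by
    rw [mulVec_sub, mulVec_smul, hrow, smul_zero, sub_zero]
  rw [submatrix_val_mulVec_comp_val _ _ (by simp), shift]

theorem mem_range_mulVecLin_iff_comp_val [CommRing R] {L : Matrix V V R}
    (hrow : L *ᵥ 1 = 0) (hcol : 1 ᵥ* L = 0) {y : V → R} (hy : ∑ w, y w = 0) :
    y ∈ LinearMap.range L.mulVecLin ↔
      y ∘ Subtype.val ∈ LinearMap.range (principalSubmatrix (· ≠ v) L).mulVecLin := by
  constructor
  · rintro ⟨x, rfl⟩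
    exact ⟨_, (mulVec_comp_val_eq_principalSubmatrix_mulVec hrow x).symm⟩
  · rintro ⟨x, hx⟩
    obtain ⟨z, hzv, rfl⟩ := exists_apply_eq_zero_comp_val_eq x
    refine ⟨z, eq_of_sum_eq_of_comp_val_eq (v := v)
      ((sum_mulVec_eq_zero hcol z).trans hy.symm) ?_⟩
    rw [← hx, mulVecLin_apply, mulVecLin_apply, mulVec_comp_val_eq_principalSubmatrix_mulVec hrow,
      hzv, zero_smul, sub_zero]

theorem det_smul_mem_range_mulVecLin {n : Type*} [Fintype n] [DecidableEq n] [CommRing R]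
    (M : Matrix n n R) (x : n → R) : M.det • x ∈ LinearMap.range M.mulVecLin :=
  ⟨M.cramer x, M.mulVec_cramer x⟩

theorem card_quotient_range_mulVecLin {n : Type*} [Fintype n] [DecidableEq n]
    {M : Matrix n n ℤ} (hM : M.det ≠ 0) :
    Nat.card ((n → ℤ) ⧸ LinearMap.range M.mulVecLin) = M.det.natAbs := by
  have injective : Function.Injective M.mulVecLin :=
    (injective_iff_map_eq_zero _).2 fun _ ↦ eq_zero_of_mulVec_eq_zero hM
  rw [← Submodule.natAbs_det_equiv _ (LinearEquiv.ofInjective M.mulVecLin injective),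
    ← LinearMap.det_toLin' M]
  rfl

variable {L : Matrix V V ℤ}

theorem mk_mem_torsion_iff {A : Type*} [AddCommGroup A] (N : AddSubgroup A) (a : A) :
    (QuotientAddGroup.mk a : A ⧸ N) ∈ AddCommGroup.torsion _ ↔ ∃ n : ℤ, n ≠ 0 ∧ n • a ∈ N := by
  simp only [AddCommGroup.mem_torsion, isOfFinAddOrder_iff_zsmul_eq_zero, ne_eq,
    ← QuotientAddGroup.mk_zsmul, QuotientAddGroup.eq_zero_iff]

theorem mk_mem_torsion_iff_sum_eq_zero (hrow : L *ᵥ 1 = 0) (hcol : 1 ᵥ* L = 0)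
    (hdet : (principalSubmatrix (· ≠ v) L).det ≠ 0) (y : V → ℤ) :
    (QuotientAddGroup.mk y : (V → ℤ) ⧸ (LinearMap.range L.mulVecLin).toAddSubgroup) ∈
      AddCommGroup.torsion _ ↔ ∑ w, y w = 0 := by
  have sum_zsmul (n : ℤ) : ∑ w, (n • y) w = n • ∑ w, y w := by
    simp [Finset.mul_sum]
  rw [mk_mem_torsion_iff]
  constructor
  · rintro ⟨n, hn, x, hx⟩
    have : n • ∑ w, y w = 0 := by rw [← sum_zsmul, ← hx]; exact sum_mulVec_eq_zero hcol x
    exact (smul_eq_zero.1 this).resolve_left hn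
  · intro hy
    refine ⟨_, hdet, (mem_range_mulVecLin_iff_comp_val hrow hcol ?_).2
      (det_smul_mem_range_mulVecLin _ (y ∘ Subtype.val))⟩
    rw [sum_zsmul, hy, smul_zero]

theorem nonempty_torsion_addEquiv (hrow : L *ᵥ 1 = 0) (hcol : 1 ᵥ* L = 0)
    (hdet : (principalSubmatrix (· ≠ v) L).det ≠ 0) :
    Nonempty (AddCommGroup.torsion ((V → ℤ) ⧸ (LinearMap.range L.mulVecLin).toAddSubgroup) ≃+
      ({u // u ≠ v} → ℤ) ⧸ LinearMap.range (principalSubmatrix (· ≠ v) L).mulVecLin) := by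
  let N := (LinearMap.range L.mulVecLin).toAddSubgroup
  let M := LinearMap.range (principalSubmatrix (· ≠ v) L).mulVecLin
  have le_comap : N ≤ M.toAddSubgroup.comap
      (LinearMap.funLeft ℤ ℤ (Subtype.val : {u // u ≠ v} → V)).toAddMonoidHom := by
    rintro _ ⟨x, rfl⟩
    exact ⟨_, (mulVec_comp_val_eq_principalSubmatrix_mulVec hrow x).symm⟩
  let restrict : (V → ℤ) ⧸ N →+ ({u // u ≠ v} → ℤ) ⧸ M.toAddSubgroup :=
    QuotientAddGroup.map N _ _ le_comap
  refine ⟨AddEquiv.ofBijective (restrict.comp (AddCommGroup.torsion _).subtype) ⟨?_, ?_⟩⟩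
  · refine (injective_iff_map_eq_zero _).2 ?_
    rintro ⟨z, hz⟩ h
    obtain ⟨y, rfl⟩ := QuotientAddGroup.mk_surjective z
    have hsum := (mk_mem_torsion_iff_sum_eq_zero hrow hcol hdet y).1 hz
    have hmem : y ∘ Subtype.val ∈ M := (QuotientAddGroup.eq_zero_iff _).1 h
    exact Subtype.ext ((QuotientAddGroup.eq_zero_iff y).2
      ((mem_range_mulVecLin_iff_comp_val hrow hcol hsum).2 hmem))
  · intro z
    obtain ⟨x, rfl⟩ := QuotientAddGroup.mk_surjective z
    obtain ⟨y, hsum, rfl⟩ := exists_sum_eq_zero_comp_val_eq x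
    exact ⟨⟨QuotientAddGroup.mk y, (mk_mem_torsion_iff_sum_eq_zero hrow hcol hdet y).2 hsum⟩, rfl⟩

theorem one_vecMul_lapMatrix (R : Type*) [CommRing R] (G : SimpleGraph V) [DecidableRel G.Adj] :
    1 ᵥ* G.lapMatrix R = 0 := by
  rw [← mulVec_transpose, G.isSymm_lapMatrix R]
  exact G.lapMatrix_mulVec_const_eq_zero

end Cokernel

end CriticalGroup

/-- **Biggs' theorem on the critical group**: for a connected graph `G` and any vertex
`v`, the critical group `K(G)` is isomorphic to `ℤ^{V∖{v}} / im_ℤ L̃` where `L̃` is the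
reduced Laplacian at `v`, and `|K(G)| = τ(G)`. -/
theorem critical_group_theorem {V : Type*} [Fintype V] [DecidableEq V]
    (G : SimpleGraph V) [DecidableRel G.Adj] (hG : G.Connected) (v : V) :
    Nonempty ((criticalGroup G) ≃+
      (({u : V // u ≠ v} → ℤ) ⧸
        LinearMap.range (((SimpleGraph.lapMatrix ℤ G).submatrix
          (Subtype.val : {u : V // u ≠ v} → V)
          (Subtype.val : {u : V // u ≠ v} → V)).mulVecLin))) ∧
    Nat.card (criticalGroup G) = treeCount G := by
  have hdet := CriticalGroup.det_reducedLaplacian_eq_treeCount ℤ G v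
  have hdet_ne : (CriticalGroup.principalSubmatrix (· ≠ v) (G.lapMatrix ℤ)).det ≠ 0 :=
    hdet.trans_ne (Int.natCast_ne_zero.2 (CriticalGroup.treeCount_pos hG).ne')
  obtain ⟨e⟩ := CriticalGroup.nonempty_torsion_addEquiv
    G.lapMatrix_mulVec_const_eq_zero (CriticalGroup.one_vecMul_lapMatrix ℤ G) hdet_ne
  refine ⟨⟨e⟩, ?_⟩
  calc Nat.card (criticalGroup G)
      = (CriticalGroup.principalSubmatrix (· ≠ v) (G.lapMatrix ℤ)).det.natAbs :=
        (Nat.card_congr e.toEquiv).trans (CriticalGroup.card_quotient_range_mulVecLin hdet_ne)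
    _ = treeCount G := by rw [hdet, Int.natAbs_natCast]
end
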